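/- arXiv:2510.15807 — 2 statements merged into one kernel-verified Lean document; each statement's English description precedes it below -/
import Mathlib

section
/- For every integer n ≥ 0 the second moment of the area of the random convex chain satisfies E[vol(T_n)²] = 1/4 − (9n² + 53n + 72)/(54(n+1)(n+2)(n+3)) − (9n+8)·H_{n+2}/(27(n+1)(n+2)) + (H_{n+2}² + H^{(2)}_{n+2})/(9(n+1)(n+2)); equivalently E[V_n²] = 1 − (18n² + 106n + 144)/(27(n+1)(n+2)(n+3)) − (36n+32)·H_{n+2}/(27(n+1)(n+2)) + 4(H_{n+2}² + H^{(2)}_{n+2})/(9(n+1)(n+2)). -/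
open MeasureTheory

noncomputable section

/-- The triangle with vertices (0,0), (1,0), (0,1). -/
def T : Set (ℝ × ℝ) := convexHull ℝ {(0, 0), (1, 0), (0, 1)}

/-- The uniform distribution on `T`: twice Lebesgue measure restricted to `T`. -/
def μT : Measure (ℝ × ℝ) := (2 : ENNReal) • (volume.restrict T)

/-- Joint law of `n` independent uniform points in `T`. -/
def P (n : ℕ) : Measure (Fin n → ℝ × ℝ) := Measure.pi fun _ => μT

/-- The random convex chain: convex hull of the points together with `(1,0)` and `(0,1)`. -/
def Tchain (n : ℕ) (ω : Fin n → ℝ × ℝ) : Set (ℝ × ℝ) :=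
  convexHull ℝ (Set.range ω ∪ {(1, 0), (0, 1)})

/-- Normalized area `V_n = 2 vol(T_n)`. -/
def V (n : ℕ) (ω : Fin n → ℝ × ℝ) : ℝ := 2 * (volume (Tchain n ω)).toReal

/-- Number of vertices of `T_n` other than the two corners. -/
def N (n : ℕ) (ω : Fin n → ℝ × ℝ) : ℕ :=
  (Set.extremePoints ℝ (Tchain n ω)).ncard - 2

/-- Normalized moments `q_{n,k} = C(n+k,k) E[V_n^k]`. -/
def q (n k : ℕ) : ℝ := ((n + k).choose k : ℝ) * ∫ ω, (V n ω) ^ k ∂ P n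

/-- Probability generating function of `N_n`. -/
def G (n : ℕ) (t : ℝ) : ℝ := ∫ ω, t ^ (N n ω) ∂ P n

/-- Harmonic number. -/
def H (j : ℕ) : ℝ := ∑ i ∈ Finset.range j, 1 / ((i : ℝ) + 1)

/-- Generalized harmonic number of order 2. -/
def H2 (j : ℕ) : ℝ := ∑ i ∈ Finset.range j, 1 / ((i : ℝ) + 1) ^ 2

/-- `c(k,ℓ)`: elementary symmetric polynomial `e_k` of `2/(j(j+1))`, `j = 1,…,ℓ`. -/
def c (k l : ℕ) : ℝ :=
  ∑ S ∈ (Finset.Icc 1 l).powersetCard k, ∏ j ∈ S, 2 / ((j : ℝ) * ((j : ℝ) + 1))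


open Set in
theorem lint_cons {E : Type*} [MeasurableSpace E] (μ : Measure E) [SigmaFinite μ] (n : ℕ)
    (f : (Fin (n + 1) → E) → ENNReal) (hf : Measurable f) :
    ∫⁻ ω, f ω ∂(Measure.pi fun _ : Fin (n + 1) => μ) =
      ∫⁻ x, ∫⁻ ω, f (Fin.cons x ω) ∂(Measure.pi fun _ : Fin n => μ) ∂μ := by
  have h := (measurePreserving_piFinSuccAbove (fun _ : Fin (n + 1) => μ) 0).symm
  rw [← h.lintegral_comp hf, lintegral_prod]
  · simp [MeasurableEquiv.piFinSuccAbove, Fin.insertNthEquiv]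
  · exact (hf.comp h.measurable).aemeasurable

theorem measurable_cons' {E : Type*} [MeasurableSpace E] (n : ℕ) :
    Measurable (fun p : E × (Fin n → E) => (Fin.cons p.1 p.2 : Fin (n + 1) → E)) := by
  refine measurable_pi_iff.2 fun i => ?_
  refine Fin.cases ?_ (fun j => ?_) i
  · exact measurable_fst
  · simp only [Fin.cons_succ]
    exact (measurable_pi_apply j).comp measurable_snd

open Set in
theorem key {E : Type*} [MeasurableSpace E] (μ μ2 κ : Measure E) [IsFiniteMeasure κ]
    [IsFiniteMeasure μ] (c : ENNReal) (S : E → E) (hS : Measurable S)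
    (hμ : μ = c • Measure.map S κ + μ2) (N : ℕ) :
    ∀ g : Set E → ENNReal, (∀ m, Measurable fun ω : Fin m → E => g (range ω)) →
      (∀ᵐ x ∂μ2, ∀ s, g (insert x s) = g s) →
      ∫⁻ ω, g (range ω) ∂(Measure.pi fun _ : Fin N => μ) =
        ∑ m ∈ Finset.range (N + 1), (N.choose m : ENNReal) *
          (c ^ m * (μ2 univ) ^ (N - m) *
            ∫⁻ ω, g (S '' range ω) ∂(Measure.pi fun _ : Fin m => κ)) := by
  induction N with
  | zero =>
    intro g hg h2
    simp [lintegral_unique]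
  | succ N ih =>
    intro g hg h2
    have hmS : ∀ m, Measurable (fun ω : Fin m → E => g (S '' range ω)) := by
      intro m
      have : (fun ω : Fin m → E => g (S '' range ω)) =
          (fun ω => g (range ω)) ∘ (fun ω : Fin m → E => fun i => S (ω i)) := by
        ext ω
        simp only [Function.comp]
        congr 1
        rw [← range_comp]; rfl
      rw [this]
      refine (hg m).comp ?_
      exact measurable_pi_iff.2 fun i => hS.comp (measurable_pi_apply i)
    have hins : ∀ x : E, ∀ m, Measurable (fun ω : Fin m → E => g (insert x (range ω))) := by
      intro x m
      have : (fun ω : Fin m → E => g (insert x (range ω))) =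
          (fun ω => g (range ω)) ∘ (fun ω : Fin m → E => (Fin.cons x ω : Fin (m + 1) → E)) := by
        ext ω
        simp [Function.comp, Fin.range_cons]
      rw [this]
      exact (hg (m + 1)).comp ((measurable_cons' m).comp measurable_prodMk_left)
    have hcons : ∀ x : E, ∫⁻ ω : Fin N → E, g (range (Fin.cons x ω : Fin (N + 1) → E))
        ∂(Measure.pi fun _ : Fin N => μ) =
        ∫⁻ ω : Fin N → E, g (insert x (range ω)) ∂(Measure.pi fun _ : Fin N => μ) := by
      intro x; simp [Fin.range_cons]
    rw [lint_cons μ N _ (hg (N + 1))]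
    simp_rw [hcons]
    have hmeas : Measurable fun x : E => ∫⁻ ω : Fin N → E, g (insert x (range ω))
        ∂(Measure.pi fun _ : Fin N => μ) := by
      refine Measurable.lintegral_prod_right' (f := fun p : E × (Fin N → E) =>
        g (insert p.1 (range p.2))) ?_
      have : (fun p : E × (Fin N → E) => g (insert p.1 (range p.2))) =
          (fun ω => g (range ω)) ∘ (fun p : E × (Fin N → E) =>
            (Fin.cons p.1 p.2 : Fin (N + 1) → E)) := by
        ext ω
        simp [Function.comp, Fin.range_cons]
      rw [this]
      exact (hg (N + 1)).comp (measurable_cons' N)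
    conv_lhs => enter [1]; rw [hμ]
    rw [lintegral_add_measure, lintegral_smul_measure, lintegral_map hmeas hS]
    have hA : ∀ x, ∫⁻ ω : Fin N → E, g (insert (S x) (range ω))
        ∂(Measure.pi fun _ : Fin N => μ) = ∑ m ∈ Finset.range (N + 1), (N.choose m : ENNReal) *
          (c ^ m * (μ2 univ) ^ (N - m) *
            ∫⁻ ω, g (S '' range (Fin.cons x ω : Fin (m + 1) → E))
              ∂(Measure.pi fun _ : Fin m => κ)) := by
      intro x
      rw [ih (fun s => g (insert (S x) s)) (hins (S x))]
      · simp [Fin.range_cons, image_insert_eq]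
      · filter_upwards [h2] with y hy s
        rw [insert_comm, hy]
    have hB : ∫⁻ x, ∫⁻ ω : Fin N → E, g (insert x (range ω))
        ∂(Measure.pi fun _ : Fin N => μ) ∂μ2 = (∫⁻ ω, g (range ω)
          ∂(Measure.pi fun _ : Fin N => μ)) * μ2 univ := by
      rw [← lintegral_const]
      refine lintegral_congr_ae ?_
      filter_upwards [h2] with x hx
      simp_rw [hx]
    rw [hB, ih g hg h2]
    simp_rw [hA]
    rw [lintegral_finsetSum']
    · have hC : ∀ m, ∫⁻ x, (N.choose m : ENNReal) *
          (c ^ m * (μ2 univ) ^ (N - m) *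
            ∫⁻ ω, g (S '' range (Fin.cons x ω : Fin (m + 1) → E))
              ∂(Measure.pi fun _ : Fin m => κ)) ∂κ = (N.choose m : ENNReal) *
          (c ^ m * (μ2 univ) ^ (N - m) *
            ∫⁻ ω, g (S '' range ω)
              ∂(Measure.pi fun _ : Fin (m + 1) => κ)) := by
        intro m
        have hm : Measurable fun x => ∫⁻ ω, g (S '' range (Fin.cons x ω : Fin (m + 1) → E))
              ∂(Measure.pi fun _ : Fin m => κ) :=
          Measurable.lintegral_prod_right' (f := fun p : E × (Fin m → E) =>
            g (S '' range (Fin.cons p.1 p.2 : Fin (m + 1) → E)))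
            ((hmS (m + 1)).comp (measurable_cons' m))
        rw [lintegral_const_mul _ (by fun_prop), lintegral_const_mul _ hm,
          lint_cons κ m _ (hmS (m + 1))]
      simp_rw [hC]
      rw [Finset.sum_choose_succ_mul (fun i j => c ^ i * (μ2 univ) ^ j *
            ∫⁻ ω, g (S '' range ω) ∂(Measure.pi fun _ : Fin i => κ)) N, add_comm]
      congr 1
      · rw [Finset.sum_mul]
        refine Finset.sum_congr rfl fun m hm => ?_
        have : N + 1 - m = (N - m) + 1 := by
          have := Finset.mem_range.1 hm
          omega
        rw [this, pow_succ]; ring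
      · rw [smul_eq_mul, Finset.mul_sum]
        refine Finset.sum_congr rfl fun m hm => ?_
        rw [pow_succ]; ring
    · intro m _
      have hm : Measurable fun x => ∫⁻ ω, g (S '' range (Fin.cons x ω : Fin (m + 1) → E))
              ∂(Measure.pi fun _ : Fin m => κ) :=
          Measurable.lintegral_prod_right' (f := fun p : E × (Fin m → E) =>
            g (S '' range (Fin.cons p.1 p.2 : Fin (m + 1) → E)))
            ((hmS (m + 1)).comp (measurable_cons' m))
      exact ((hm.const_mul _).const_mul _).aemeasurable

/-- Twice the area of the hull of a point set with the two corners. -/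
def W (s : Set (ℝ × ℝ)) : ENNReal := 2 * volume (convexHull ℝ (s ∪ {(1, 0), (0, 1)}))

theorem measurable_W (n : ℕ) : Measurable fun ω : Fin n → ℝ × ℝ => W (Set.range ω) := by
  unfold W
  refine Measurable.const_mul ?_ _
  let v : (Fin n → ℝ × ℝ) → (Fin n ⊕ Fin 2) → ℝ × ℝ := fun ω => Sum.elim ω ![(1, 0), (0, 1)]
  have hv : ∀ ω, Set.range (v ω) = Set.range ω ∪ {(1, 0), (0, 1)} := by
    intro ω
    simp [v, Set.Sum.elim_range, Set.insert_comm]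
  have hvc : ∀ i, Continuous fun ω => v ω i := by
    intro i
    rcases i with i | i
    · exact continuous_apply i
    · exact continuous_const
  let C : Set ((Fin n → ℝ × ℝ) × (ℝ × ℝ)) := Prod.fst ''
    {p : ((Fin n → ℝ × ℝ) × (ℝ × ℝ)) × stdSimplex ℝ (Fin n ⊕ Fin 2) |
      ∑ i, p.2.1 i • v p.1.1 i = p.1.2}
  have hC : IsClosed C := by
    have : CompactSpace (stdSimplex ℝ (Fin n ⊕ Fin 2)) :=
      isCompact_iff_compactSpace.1 (isCompact_stdSimplex ℝ _)
    refine isClosedMap_fst_of_compactSpace _ ?_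
    refine isClosed_eq ?_ (by fun_prop)
    refine continuous_finsetSum _ fun i _ => ?_
    refine Continuous.fun_smul ?_ ?_
    · exact (continuous_apply i).comp (continuous_subtype_val.comp continuous_snd)
    · exact (hvc i).comp (continuous_fst.comp continuous_fst)
  have := measurable_measure_prodMk_left (ν := (volume : Measure (ℝ × ℝ))) hC.measurableSet
  convert this using 3 with ω
  rw [← hv]
  have h1 : Set.range (v ω) = (Fintype.linearCombination ℝ (v ω)) ''
      (Set.range fun (i : Fin n ⊕ Fin 2) => (Pi.single i 1 : (Fin n ⊕ Fin 2) → ℝ)) := by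
    rw [← Set.range_comp]
    congr 1
    ext i : 1
    simp
  rw [h1, ← LinearMap.image_convexHull, convexHull_rangle_single_eq_stdSimplex]
  ext z
  simp only [Set.mem_image, Set.mem_preimage, C, Set.mem_ofPred_eq, Fintype.linearCombination_apply]
  constructor
  · rintro ⟨w, hw, rfl⟩
    exact ⟨(⟨ω, _⟩, ⟨w, hw⟩), rfl, rfl⟩
  · rintro ⟨⟨⟨a, b⟩, w⟩, h, h'⟩
    simp only [Prod.mk.injEq] at h'
    obtain ⟨rfl, rfl⟩ := h'
    exact ⟨w.1, w.2, h⟩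

theorem convex3 {K : Set (ℝ × ℝ)} (hK : Convex ℝ K) {p q r : ℝ × ℝ} (hp : p ∈ K) (hq : q ∈ K)
    (hr : r ∈ K) {a b c : ℝ} (ha : 0 ≤ a) (hb : 0 ≤ b) (hc : 0 ≤ c) (h : a + b + c = 1) :
    a • p + b • q + c • r ∈ K := by
  have := hK.sum_mem (t := Finset.univ) (w := ![a, b, c]) (z := ![p, q, r])
    (by intro i _; fin_cases i <;> simpa) (by simp [Fin.sum_univ_three, h])
    (by intro i _; fin_cases i <;> simpa)
  simpa [Fin.sum_univ_three] using this

/-- A closed half plane. -/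
theorem convex_half (a b c : ℝ) : Convex ℝ {z : ℝ × ℝ | c ≤ a * z.1 + b * z.2} := by
  intro p hp q hq s t hs ht hst
  simp only [Set.mem_ofPred_eq, Prod.fst_add, Prod.smul_fst, smul_eq_mul, Prod.snd_add,
    Prod.smul_snd] at *
  have h1 := mul_le_mul_of_nonneg_left hp hs
  have h2 := mul_le_mul_of_nonneg_left hq ht
  have h3 : c = s * c + t * c := by rw [← add_mul, hst, one_mul]
  nlinarith

theorem closed_half (a b c : ℝ) : IsClosed {z : ℝ × ℝ | c ≤ a * z.1 + b * z.2} :=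
  isClosed_le continuous_const (by fun_prop)

theorem T_eq : T = {z | 0 ≤ 1 * z.1 + 0 * z.2} ∩ {z | 0 ≤ 0 * z.1 + 1 * z.2} ∩
    {z | -1 ≤ (-1) * z.1 + (-1) * z.2} := by
  apply Set.Subset.antisymm
  · apply convexHull_min
    · rintro z (rfl | rfl | rfl) <;> simp
    · exact ((convex_half _ _ _).inter (convex_half _ _ _)).inter (convex_half _ _ _)
  · rintro ⟨x, y⟩ ⟨⟨h1, h2⟩, h3⟩
    simp only [Set.mem_ofPred_eq] at h1 h2 h3
    have := convex3 (convex_convexHull ℝ {((0 : ℝ), (0 : ℝ)), (1, 0), (0, 1)})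
      (p := (0, 0)) (q := (1, 0)) (r := (0, 1)) (a := 1 - x - y) (b := x) (c := y)
      (subset_convexHull _ _ (by simp)) (subset_convexHull _ _ (by simp))
      (subset_convexHull _ _ (by simp)) (by linarith) (by linarith) (by linarith) (by ring)
    simpa [T] using this

theorem mem_T {z : ℝ × ℝ} : z ∈ T ↔ 0 ≤ z.1 ∧ 0 ≤ z.2 ∧ z.1 + z.2 ≤ 1 := by
  rw [T_eq]
  simp only [Set.mem_inter_iff, Set.mem_ofPred_eq]
  constructor
  · rintro ⟨⟨h1, h2⟩, h3⟩
    refine ⟨by linarith, by linarith, by linarith⟩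
  · rintro ⟨h1, h2, h3⟩
    refine ⟨⟨by linarith, by linarith⟩, by linarith⟩

theorem convex_T : Convex ℝ T := convex_convexHull _ _

theorem closed_T : IsClosed T := by
  rw [T_eq]
  exact ((closed_half _ _ _).inter (closed_half _ _ _)).inter (closed_half _ _ _)

theorem meas_T : MeasurableSet T := closed_T.measurableSet

/-- Affine map of the plane. -/
def aff (a b c d e f : ℝ) : (ℝ × ℝ) →ᵃ[ℝ] (ℝ × ℝ) :=
  (Matrix.toLin (Module.Basis.finTwoProd ℝ) (Module.Basis.finTwoProd ℝ) !![a, b; c, d]).toAffineMap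
    + AffineMap.const ℝ (ℝ × ℝ) (e, f)

theorem aff_apply (a b c d e f : ℝ) (z : ℝ × ℝ) :
    aff a b c d e f z = (a * z.1 + b * z.2 + e, c * z.1 + d * z.2 + f) := by
  simp [aff, Matrix.toLin_finTwoProd_apply]

theorem det_lin (a b c d : ℝ) : LinearMap.det (Matrix.toLin (Module.Basis.finTwoProd ℝ)
    (Module.Basis.finTwoProd ℝ) !![a, b; c, d]) = a * d - b * c := by
  rw [LinearMap.det_toLin, Matrix.det_fin_two_of]

theorem aff_meas (a b c d e f : ℝ) : Measurable (aff a b c d e f) := by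
  have : ⇑(aff a b c d e f) = fun z => (a * z.1 + b * z.2 + e, c * z.1 + d * z.2 + f) := by
    ext z : 1
    exact aff_apply ..
  rw [this]
  fun_prop

theorem aff_comp (a b c d e f : ℝ) : ⇑(aff a b c d e f) = (fun w => w + (e, f)) ∘
    (Matrix.toLin (Module.Basis.finTwoProd ℝ) (Module.Basis.finTwoProd ℝ) !![a, b; c, d]) := by
  ext z : 1
  simp [aff]

theorem vol_aff (a b c d e f : ℝ) (s : Set (ℝ × ℝ)) :
    volume (aff a b c d e f '' s) = ENNReal.ofReal |a * d - b * c| * volume s := by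
  rw [aff_comp, Set.image_comp]
  simp only [Set.image_add_right, measure_preimage_add_right]
  rw [Measure.addHaar_image_linearMap, det_lin]

theorem map_aff (a b c d e f : ℝ) (h : 0 < a * d - b * c) :
    ENNReal.ofReal (a * d - b * c) • Measure.map (aff a b c d e f) volume = volume := by
  have hm : Measurable (Matrix.toLin (Module.Basis.finTwoProd ℝ) (Module.Basis.finTwoProd ℝ)
      !![a, b; c, d]) := (LinearMap.continuous_of_finiteDimensional _).measurable
  rw [aff_comp, ← Measure.map_map (by fun_prop) hm,
    Measure.map_linearMap_addHaar_eq_smul_addHaar, det_lin, Measure.map_smul,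
    map_add_right_eq_self, smul_smul, ← ENNReal.ofReal_mul h.le, abs_of_pos (by positivity),
    mul_inv_cancel₀ h.ne']
  · simp
  · rw [det_lin]; exact h.ne'

theorem null_graph (a b c : ℝ) (hb : b ≠ 0) : volume {z : ℝ × ℝ | a * z.1 + b * z.2 = c} = 0 := by
  have hm : MeasurableSet {z : ℝ × ℝ | a * z.1 + b * z.2 = c} :=
    measurableSet_eq_fun (by fun_prop) (by fun_prop)
  rw [Measure.volume_eq_prod, Measure.measure_prod_null hm]
  refine Filter.Eventually.of_forall fun x => ?_
  have : Prod.mk x ⁻¹' {z : ℝ × ℝ | a * z.1 + b * z.2 = c} ⊆ {(c - a * x) / b} := by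
    intro y hy
    simp only [Set.mem_preimage, Set.mem_ofPred_eq] at hy
    simp only [Set.mem_singleton_iff]
    field_simp
    linarith
  exact measure_mono_null this (by simp)

/-- `∫⁻` over the triangle as an iterated integral. -/
theorem lint_T (f : ℝ × ℝ → ENNReal) (hf : Measurable f) :
    ∫⁻ z in T, f z = ∫⁻ x in Set.Icc (0 : ℝ) 1, ∫⁻ y in Set.Icc (0 : ℝ) (1 - x), f (x, y) := by
  rw [← lintegral_indicator meas_T, Measure.volume_eq_prod,
    lintegral_prod _ (hf.indicator meas_T).aemeasurable,
    ← lintegral_indicator measurableSet_Icc]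
  refine lintegral_congr fun x => ?_
  by_cases hx : x ∈ Set.Icc (0 : ℝ) 1
  · rw [Set.indicator_of_mem hx, ← lintegral_indicator measurableSet_Icc]
    refine lintegral_congr fun y => ?_
    have : (x, y) ∈ T ↔ y ∈ Set.Icc (0 : ℝ) (1 - x) := by
      rw [mem_T, Set.mem_Icc]
      constructor
      · rintro ⟨_, h2, h3⟩; exact ⟨h2, by simp only at h3; linarith⟩
      · rintro ⟨h2, h3⟩; exact ⟨hx.1, h2, by simp only; linarith⟩
    by_cases hy : (x, y) ∈ T
    · rw [Set.indicator_of_mem hy, Set.indicator_of_mem (this.1 hy)]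
    · rw [Set.indicator_of_notMem hy, Set.indicator_of_notMem (mt this.2 hy)]
  · rw [Set.indicator_of_notMem hx]
    have : ∀ y, T.indicator f (x, y) = 0 := by
      intro y
      refine Set.indicator_of_notMem (fun h => hx ?_) _
      rw [mem_T] at h
      exact ⟨h.1, by have := h.2.1; have := h.2.2; simp only at *; linarith⟩
    simp [this]

theorem vol_T : volume T = ENNReal.ofReal (1 / 2) := by
  have h := lint_T (fun _ => 1) measurable_const
  simp only [lintegral_const, one_mul, Measure.restrict_apply, MeasurableSet.univ,
    Set.univ_inter, Real.volume_Icc, sub_zero] at h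
  rw [h, ← ofReal_integral_eq_lintegral_ofReal]
  · rw [integral_Icc_eq_integral_Ioc, ← intervalIntegral.integral_of_le zero_le_one,
      intervalIntegral.integral_sub (by simp) (by simp), integral_id]
    norm_num
  · exact (by fun_prop : Continuous fun x : ℝ => 1 - x).continuousOn.integrableOn_Icc
  · refine (ae_restrict_iff' measurableSet_Icc).2 (Filter.Eventually.of_forall fun x hx => ?_)
    simpa using hx.2

instance : IsProbabilityMeasure μT := by
  constructor
  simp only [μT, Measure.smul_apply, Measure.restrict_apply_univ, vol_T, smul_eq_mul]
  rw [← ENNReal.ofReal_ofNat, ← ENNReal.ofReal_mul (by norm_num)]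
  norm_num

/-- Nondegenerate position of the first vertex. -/
def Good (z : ℝ × ℝ) : Prop := 0 < z.1 ∧ 0 ≤ z.2 ∧ z.1 + z.2 < 1

/-- Slope of the line from `(1,0)` through `z`. -/
def bet (z : ℝ × ℝ) : ℝ := z.2 / (1 - z.1)

/-- Affine map of `T` onto the remaining triangle. -/
def Phi (z : ℝ × ℝ) : (ℝ × ℝ) →ᵃ[ℝ] (ℝ × ℝ) :=
  aff z.1 0 (z.2 - bet z) (1 - bet z) 0 (bet z)

def uu (z : ℝ × ℝ) : ℝ := z.1 * (1 - bet z)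
def tt (z : ℝ × ℝ) : ℝ := 1 - z.1 - z.2
def RR (z : ℝ × ℝ) : Set (ℝ × ℝ) := {w | z.2 * (1 - w.1) ≤ w.2 * (1 - z.1)}
def ell (z w : ℝ × ℝ) : ℝ := w.1 * (1 - z.2) + z.1 * w.2 - z.1
def Tri (z : ℝ × ℝ) : Set (ℝ × ℝ) := convexHull ℝ {z, (1, 0), (0, 1)}

theorem Good.bet_lt {z : ℝ × ℝ} (h : Good z) : bet z < 1 := by
  obtain ⟨h1, h2, h3⟩ := h
  unfold bet
  rw [div_lt_one (by linarith)]
  linarith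

theorem Good.bet_nonneg {z : ℝ × ℝ} (h : Good z) : 0 ≤ bet z := by
  obtain ⟨h1, h2, h3⟩ := h
  exact div_nonneg h2 (by linarith)

theorem Good.bet_mul {z : ℝ × ℝ} (h : Good z) : bet z * (1 - z.1) = z.2 := by
  obtain ⟨h1, h2, h3⟩ := h
  unfold bet
  exact div_mul_cancel₀ _ (by linarith)

theorem Good.uu_pos {z : ℝ × ℝ} (h : Good z) : 0 < uu z :=
  mul_pos h.1 (by have := h.bet_lt; linarith)

theorem Good.tt_pos {z : ℝ × ℝ} (h : Good z) : 0 < tt z := by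
  have := h.2.2
  unfold tt; linarith

theorem Good.mem_T {z : ℝ × ℝ} (h : Good z) : z ∈ T := _root_.mem_T.2 ⟨h.1.le, h.2.1, h.2.2.le⟩

theorem tri_eq (z : ℝ × ℝ) : Tri z = aff (1 - z.1) (-z.1) (-z.2) (1 - z.2) z.1 z.2 '' T := by
  rw [T, AffineMap.image_convexHull, Tri]
  congr 1
  simp [Set.image_insert_eq, aff_apply]

theorem vol_tri {z : ℝ × ℝ} (h : Good z) : volume (Tri z) = ENNReal.ofReal (tt z) * volume T := by
  rw [tri_eq, vol_aff]
  have : (1 - z.1) * (1 - z.2) - -z.1 * -z.2 = tt z := by unfold tt; ring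
  rw [this, abs_of_pos h.tt_pos]

theorem mem_tri {z w : ℝ × ℝ} (h : Good z) (hw : w ∈ T) (hR : w ∈ RR z) (hl : 0 ≤ ell z w) :
    w ∈ Tri z := by
  have ht := h.tt_pos
  have htd : tt z = 1 - z.1 - z.2 := rfl
  rw [mem_T] at hw
  simp only [RR, Set.mem_ofPred_eq] at hR
  have := convex3 (convex_convexHull ℝ {z, (1, 0), (0, 1)})
      (p := z) (q := (1, 0)) (r := (0, 1)) (a := (1 - w.1 - w.2) / tt z) (b := ell z w / tt z)
      (c := (w.2 * (1 - z.1) - z.2 * (1 - w.1)) / tt z)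
      (subset_convexHull _ _ (by simp)) (subset_convexHull _ _ (by simp))
      (subset_convexHull _ _ (by simp)) (div_nonneg (by linarith) ht.le) (div_nonneg hl ht.le)
      (div_nonneg (by linarith) ht.le) (by field_simp; rw [htd, ell]; ring)
  unfold Tri
  convert this using 1
  ext
  · simp
    field_simp
    rw [htd, ell]; ring
  · simp
    field_simp
    rw [htd]; ring

theorem tri_sub {z w : ℝ × ℝ} (h : Good z) (hw : w ∈ Tri z) :
    w ∈ T ∧ w ∈ RR z ∧ 0 ≤ ell z w := by
  obtain ⟨h1, h2, h3⟩ := h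
  have : Tri z ⊆ T ∩ {w | z.2 ≤ z.2 * w.1 + (1 - z.1) * w.2} ∩
      {w | z.1 ≤ (1 - z.2) * w.1 + z.1 * w.2} := by
    apply convexHull_min
    · rintro w (rfl | rfl | rfl)
      · refine ⟨⟨mem_T.2 ⟨h1.le, h2, h3.le⟩, ?_⟩, ?_⟩ <;> simp only [Set.mem_ofPred_eq] <;> linarith
      · refine ⟨⟨mem_T.2 (by simp), ?_⟩, ?_⟩ <;> simp only [Set.mem_ofPred_eq] <;> linarith
      · refine ⟨⟨mem_T.2 (by simp), ?_⟩, ?_⟩ <;> simp only [Set.mem_ofPred_eq] <;> linarith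
    · exact (convex_T.inter (convex_half _ _ _)).inter (convex_half _ _ _)
  obtain ⟨⟨ha, hb⟩, hc⟩ := this hw
  simp only [Set.mem_ofPred_eq] at hb hc
  refine ⟨ha, ?_, ?_⟩
  · simp only [RR, Set.mem_ofPred_eq]; linarith
  · unfold ell; linarith

theorem Phi_apply (z w : ℝ × ℝ) : Phi z w = (z.1 * w.1,
    (z.2 - bet z) * w.1 + (1 - bet z) * w.2 + bet z) := by
  simp [Phi, aff_apply]

theorem Phi_A (z : ℝ × ℝ) : Phi z (1, 0) = z := by
  rw [Phi_apply]; ext <;> simp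

theorem Phi_B (z : ℝ × ℝ) : Phi z (0, 1) = (0, 1) := by
  rw [Phi_apply]; ext <;> simp

theorem Phi_mem {z w : ℝ × ℝ} (h : Good z) :
    (Phi z w ∈ T ∧ Phi z w ∈ RR z ∧ ell z (Phi z w) ≤ 0) ↔ w ∈ T := by
  have hb := h.bet_mul
  have hb1 := h.bet_lt
  have hb0 := h.bet_nonneg
  obtain ⟨h1, h2, h3⟩ := h
  have e1 : (Phi z w).2 * (1 - z.1) - z.2 * (1 - (Phi z w).1) = w.2 * (1 - z.1 - z.2) := by
    rw [Phi_apply]; simp only; linear_combination (1 - w.1 - w.2) * hb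
  have e2 : ell z (Phi z w) = z.1 * ((w.1 + w.2 - 1) * (1 - bet z)) := by
    rw [Phi_apply, ell]; simp only; ring
  have e3 : ell z (Phi z w) ≤ 0 ↔ w.1 + w.2 ≤ 1 := by
    rw [e2]
    have hp : 0 < z.1 * (1 - bet z) := mul_pos h1 (by linarith)
    constructor
    · intro hh; by_contra hc; push Not at hc
      nlinarith [mul_pos hp (sub_pos.2 hc)]
    · intro hh; nlinarith [mul_nonneg hp.le (sub_nonneg.2 hh)]
  have e4 : Phi z w ∈ RR z ↔ 0 ≤ w.2 := by
    have hp : 0 < 1 - z.1 - z.2 := by linarith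
    simp only [RR, Set.mem_ofPred_eq]
    rw [← sub_nonneg, e1]
    exact mul_nonneg_iff_of_pos_right hp
  rw [e3, e4, mem_T, mem_T]
  have e5 : (Phi z w).1 = z.1 * w.1 := by rw [Phi_apply]
  have e6 : (Phi z w).2 = (z.2 - bet z) * w.1 + (1 - bet z) * w.2 + bet z := by rw [Phi_apply]
  rw [e5, e6]
  have hzb : z.2 - bet z = - (bet z * z.1) := by linarith
  constructor
  · rintro ⟨⟨a, b, c⟩, d, e⟩
    exact ⟨nonneg_of_mul_nonneg_right a h1, d, e⟩
  · rintro ⟨a, d, e⟩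
    have q1 := mul_nonneg h1.le a
    have q2 : 0 ≤ (1 - bet z) * w.2 := mul_nonneg (by linarith) d
    refine ⟨⟨q1, ?_, ?_⟩, d, e⟩
    · rw [hzb]
      nlinarith [mul_nonneg hb0 (show 0 ≤ 1 - z.1 * w.1 by nlinarith)]
    · rw [hzb]
      have : z.1 * w.1 ≤ w.1 := by nlinarith
      nlinarith [mul_nonneg (sub_nonneg.2 hb1.le) (show 0 ≤ 1 - w.1 - w.2 by linarith)]

theorem meas_RR (z : ℝ × ℝ) : MeasurableSet (RR z) :=
  measurableSet_le (by fun_prop) (by fun_prop)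

theorem meas_ell (z : ℝ × ℝ) : MeasurableSet {w | ell z w ≤ 0} := by
  unfold ell
  exact measurableSet_le (by fun_prop) (by fun_prop)

theorem null_ell {z : ℝ × ℝ} (h : Good z) : volume {w | ell z w = 0} = 0 := by
  have := null_graph (1 - z.2) z.1 z.1 h.1.ne'
  convert this using 2
  ext w
  simp only [Set.mem_ofPred_eq, ell]
  constructor <;> intro h <;> linarith

/-- The part of the restricted measure whose points do not matter. -/
def mu2 (z : ℝ × ℝ) : Measure (ℝ × ℝ) := μT.restrict (RR z \ {w | ell z w ≤ 0})

theorem mu2_mem {z : ℝ × ℝ} (h : Good z) : ∀ᵐ w ∂(mu2 z), w ∈ Tri z := by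
  unfold mu2 μT
  rw [Measure.restrict_smul, Measure.restrict_restrict ((meas_RR z).diff (meas_ell z))]
  refine Measure.ae_smul_measure ?_ _
  filter_upwards [ae_restrict_mem (((meas_RR z).diff (meas_ell z)).inter meas_T)] with w hw
  obtain ⟨⟨h1, h2⟩, h3⟩ := hw
  exact mem_tri h h3 h1 (le_of_lt (by simpa using h2))

theorem mu2_univ {z : ℝ × ℝ} (h : Good z) : mu2 z Set.univ = ENNReal.ofReal (tt z) := by
  have hv : volume ((RR z \ {w | ell z w ≤ 0}) ∩ T) = volume (Tri z) := by
    apply le_antisymm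
    · refine measure_mono ?_
      rintro w ⟨⟨h1, h2⟩, h3⟩
      exact mem_tri h h3 h1 (le_of_lt (by simpa using h2))
    · have : Tri z ⊆ ((RR z \ {w | ell z w ≤ 0}) ∩ T) ∪ {w | ell z w = 0} := by
        intro w hw
        obtain ⟨h1, h2, h3⟩ := tri_sub h hw
        rcases h3.eq_or_lt with h4 | h4
        · right; exact h4.symm
        · left; exact ⟨⟨h2, by simpa using h4⟩, h1⟩
      refine (measure_mono this).trans ((measure_union_le _ _).trans ?_)
      rw [null_ell h, add_zero]
  unfold mu2 μT
  rw [Measure.restrict_smul, Measure.restrict_restrict ((meas_RR z).diff (meas_ell z)),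
    Measure.smul_apply, Measure.restrict_apply_univ, hv, vol_tri h, vol_T, smul_eq_mul]
  rw [← ENNReal.ofReal_ofNat, ← ENNReal.ofReal_mul h.tt_pos.le, ← ENNReal.ofReal_mul (by norm_num)]
  congr 1; ring

theorem restrict_RR {z : ℝ × ℝ} (h : Good z) :
    μT.restrict (RR z) = ENNReal.ofReal (uu z) • Measure.map (Phi z) μT + mu2 z := by
  rw [← Measure.restrict_inter_add_sdiff (RR z) (meas_ell z)]
  unfold mu2
  congr 1
  have hm : Measurable (Phi z) := aff_meas ..
  have hd : z.1 * (1 - bet z) - 0 * (z.2 - bet z) = uu z := by unfold uu; ring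
  have hmap : ENNReal.ofReal (uu z) • Measure.map (Phi z) volume = volume := by
    have := map_aff z.1 0 (z.2 - bet z) (1 - bet z) 0 (bet z) (by rw [hd]; exact h.uu_pos)
    rwa [hd] at this
  have hmD : MeasurableSet ((RR z ∩ {w | ell z w ≤ 0}) ∩ T) :=
    ((meas_RR z).inter (meas_ell z)).inter meas_T
  have hpre : Phi z ⁻¹' ((RR z ∩ {w | ell z w ≤ 0}) ∩ T) = T := by
    ext w
    rw [← Phi_mem h]
    simp only [Set.mem_preimage, Set.mem_inter_iff, Set.mem_ofPred_eq]
    tauto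
  unfold μT
  rw [Measure.restrict_smul, Measure.restrict_restrict ((meas_RR z).inter (meas_ell z)),
    Measure.map_smul]
  rw [smul_comm]
  congr 1
  conv_lhs => rw [← hmap]
  rw [Measure.restrict_smul, Measure.restrict_map hm hmD, hpre]

theorem hull_eq {z : ℝ × ℝ} (h : Good z) (s : Set (ℝ × ℝ)) (hs : s ⊆ T) :
    convexHull ℝ (insert z (Phi z '' s) ∪ {(1, 0), (0, 1)}) =
      Tri z ∪ Phi z '' (convexHull ℝ (s ∪ {(1, 0), (0, 1)})) := by
  have hST : convexHull ℝ (s ∪ {(1, 0), (0, 1)}) ⊆ T := by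
    apply convexHull_min _ convex_T
    refine Set.union_subset hs ?_
    rintro w (rfl | rfl) <;> rw [mem_T] <;> simp
  have himg : Phi z '' (convexHull ℝ (s ∪ {(1, 0), (0, 1)})) =
      convexHull ℝ (Phi z '' s ∪ {z, (0, 1)}) := by
    rw [AffineMap.image_convexHull, Set.image_union]
    simp [Set.image_insert_eq, Phi_A, Phi_B]
  apply Set.Subset.antisymm
  · apply convexHull_min
    · rintro w ((rfl | hw) | rfl | rfl)
      · left; exact subset_convexHull _ _ (by simp)
      · right; rw [himg]; exact subset_convexHull _ _ (Or.inl hw)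
      · left; exact subset_convexHull _ _ (by simp)
      · left; exact subset_convexHull _ _ (by simp)
    · have hKc : Convex ℝ (Phi z '' (convexHull ℝ (s ∪ {(1, 0), (0, 1)}))) := by
        rw [himg]; exact convex_convexHull _ _
      have hTc : Convex ℝ (Tri z) := convex_convexHull _ _
      have hK : ∀ w ∈ Phi z '' (convexHull ℝ (s ∪ {(1, 0), (0, 1)})),
          w ∈ T ∧ w ∈ RR z ∧ ell z w ≤ 0 := by
        rintro _ ⟨w, hw, rfl⟩
        exact (Phi_mem h).2 (hST hw)
      -- points on the common segment
      have hseg : ∀ w, w ∈ T → w ∈ RR z → ell z w = 0 →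
          w ∈ Tri z ∧ w ∈ Phi z '' (convexHull ℝ (s ∪ {(1, 0), (0, 1)})) := by
        intro w hwT hwR hwl
        refine ⟨mem_tri h hwT hwR hwl.ge, ?_⟩
        rw [himg]
        have hz1 := h.1
        rw [mem_T] at hwT
        simp only [RR, Set.mem_ofPred_eq] at hwR
        unfold ell at hwl
        have hle : w.1 ≤ z.1 := by
          have htt := h.tt_pos
          unfold tt at htt
          by_contra hc
          push Not at hc
          nlinarith [mul_pos htt (sub_pos.2 hc), mul_le_mul_of_nonneg_left hwR hz1.le]
        have := convex3 (convex_convexHull ℝ (Phi z '' s ∪ {z, (0, 1)}))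
          (p := z) (q := (0, 1)) (r := (0, 1)) (a := w.1 / z.1) (b := 1 - w.1 / z.1) (c := 0)
          (subset_convexHull _ _ (by simp)) (subset_convexHull _ _ (by simp))
          (subset_convexHull _ _ (by simp)) (div_nonneg hwT.1 hz1.le)
          (by rw [sub_nonneg, div_le_one hz1]; exact hle) le_rfl (by ring)
        convert this using 1
        ext
        · simp
          field_simp
        · simp
          field_simp
          linarith
      have hTR : Convex ℝ (T ∩ RR z) := by
        refine convex_T.inter ?_
        have := convex_half z.2 (1 - z.1) z.2
        convert this using 1
        ext w
        simp only [RR, Set.mem_ofPred_eq]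
        constructor <;> intro h <;> linarith
      have main : ∀ p ∈ Tri z, ∀ k ∈ Phi z '' (convexHull ℝ (s ∪ {(1, 0), (0, 1)})),
          segment ℝ p k ⊆ Tri z ∪ Phi z '' (convexHull ℝ (s ∪ {(1, 0), (0, 1)})) := by
        intro p hp k hk
        obtain ⟨p1, p2, p3⟩ := tri_sub h hp
        obtain ⟨k1, k2, k3⟩ := hK k hk
        -- crossing point
        obtain ⟨m, hm, hm0⟩ : ∃ m ∈ segment ℝ p k, ell z m = 0 := by
          rcases eq_or_lt_of_le p3 with h0 | h0
          · exact ⟨p, left_mem_segment _ _ _, h0.symm⟩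
          · have hd : 0 < ell z p - ell z k := by linarith
            refine ⟨(-ell z k / (ell z p - ell z k)) • p + (ell z p / (ell z p - ell z k)) • k,
              ⟨_, _, div_nonneg (by linarith) hd.le, div_nonneg h0.le hd.le, ?_, rfl⟩, ?_⟩
            · field_simp; ring
            · have : ∀ a b : ℝ, a + b = 1 → ell z (a • p + b • k) = a * ell z p + b * ell z k := by
                intro a b hab
                simp only [ell, Prod.fst_add, Prod.smul_fst, smul_eq_mul, Prod.snd_add,
                  Prod.smul_snd]
                linear_combination z.1 * hab
              rw [this _ _ (by field_simp; ring)]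
              field_simp; ring
        have hmTR := hTR.segment_subset ⟨p1, p2⟩ ⟨k1, k2⟩ hm
        obtain ⟨hm1, hm2⟩ := hseg m hmTR.1 hmTR.2 hm0
        intro w hw
        have : w ∈ segment ℝ p m ∪ segment ℝ m k := by
          have hml : m ∈ Set.range (AffineMap.lineMap p k : ℝ → ℝ × ℝ) := by
            rw [segment_eq_image_lineMap] at hm
            exact Set.image_subset_range _ _ hm
          rw [← insert_endpoints_openSegment] at hw
          rcases hw with rfl | rfl | hw
          · left; exact left_mem_segment _ _ _
          · right; exact right_mem_segment _ _ _
          · rcases openSegment_subset_union p k hml hw with rfl | hw | hw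
            · left; exact right_mem_segment _ _ _
            · left; exact openSegment_subset_segment _ _ _ hw
            · right; exact openSegment_subset_segment _ _ _ hw
        rcases this with hh | hh
        · left; exact hTc.segment_subset hp hm1 hh
        · right; exact hKc.segment_subset hm2 hk hh
      rw [convex_iff_segment_subset]
      rintro p (hp | hp) k (hk | hk)
      · exact (hTc.segment_subset hp hk).trans Set.subset_union_left
      · exact main p hp k hk
      · rw [segment_symm]; exact main k hk p hp
      · exact (hKc.segment_subset hp hk).trans Set.subset_union_right
  · apply Set.union_subset
    · apply convexHull_mono
      rintro w (rfl | rfl | rfl) <;> simp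
    · rw [himg]
      apply convexHull_min _ (convex_convexHull _ _)
      rintro w (hw | rfl | rfl)
      · exact subset_convexHull _ _ (Or.inl (Or.inr hw))
      · exact subset_convexHull _ _ (by simp)
      · exact subset_convexHull _ _ (by simp)

theorem W_step {z : ℝ × ℝ} (h : Good z) (s : Set (ℝ × ℝ)) (hs : s ⊆ T) :
    W (insert z (Phi z '' s)) = ENNReal.ofReal (tt z) + ENNReal.ofReal (uu z) * W s := by
  have hST : convexHull ℝ (s ∪ {(1, 0), (0, 1)}) ⊆ T := by
    apply convexHull_min _ convex_T
    refine Set.union_subset hs ?_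
    rintro w (rfl | rfl) <;> rw [mem_T] <;> simp
  unfold W
  have htm : MeasurableSet (Tri z) := by
    apply IsClosed.measurableSet
    apply IsCompact.isClosed
    apply Set.Finite.isCompact_convexHull
    simp
  rw [hull_eq h s hs, measure_union₀' htm.nullMeasurableSet, vol_tri h, vol_T]
  · have hd : z.1 * (1 - bet z) - 0 * (z.2 - bet z) = uu z := by unfold uu; ring
    have := vol_aff z.1 0 (z.2 - bet z) (1 - bet z) 0 (bet z)
      (convexHull ℝ (s ∪ {(1, 0), (0, 1)}))
    rw [hd, abs_of_pos h.uu_pos] at this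
    rw [Phi, this, mul_add]
    congr 1
    · rw [← ENNReal.ofReal_ofNat, ← ENNReal.ofReal_mul h.tt_pos.le,
        ← ENNReal.ofReal_mul (by norm_num)]
      congr 1; ring
    · ring
  · refine measure_mono_null ?_ (null_ell h)
    rintro w ⟨h1, ⟨v, hv, rfl⟩⟩
    exact le_antisymm ((Phi_mem h).2 (hST hv)).2.2 (tri_sub h h1).2.2

theorem W_insert {z x : ℝ × ℝ} (hx : x ∈ Tri z) (s : Set (ℝ × ℝ)) :
    W (insert z (insert x s)) = W (insert z s) := by
  unfold W
  congr 2
  apply Set.Subset.antisymm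
  · apply convexHull_min _ (convex_convexHull _ _)
    rintro w ((rfl | rfl | hw) | hw)
    · exact subset_convexHull _ _ (by simp)
    · refine convexHull_mono ?_ hx
      rintro w (rfl | rfl | rfl) <;> simp
    · exact subset_convexHull _ _ (Or.inl (Or.inr hw))
    · exact subset_convexHull _ _ (Or.inr hw)
  · apply convexHull_mono
    rintro w ((rfl | hw) | hw)
    · simp
    · exact Or.inl (Or.inr (Or.inr hw))
    · exact Or.inr hw

theorem ae_good : ∀ᵐ z ∂μT, Good z := by
  unfold μT
  refine Measure.ae_smul_measure ?_ _
  have h1 : ∀ᵐ z : ℝ × ℝ, z.1 + z.2 ≠ 1 := by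
    have := null_graph 1 1 1 one_ne_zero
    simp only [one_mul] at this
    exact compl_mem_ae_iff.2 this
  have h2 : ∀ᵐ z : ℝ × ℝ, z.1 ≠ 0 := by
    refine compl_mem_ae_iff.2 ?_
    have : {z : ℝ × ℝ | z.1 = 0} = {(0 : ℝ)} ×ˢ Set.univ := by ext; simp
    change volume {z : ℝ × ℝ | z.1 = 0} = 0
    rw [this, Measure.volume_eq_prod, Measure.prod_prod]
    simp
  filter_upwards [ae_restrict_mem meas_T, ae_restrict_of_ae h1, ae_restrict_of_ae h2]
    with z hz ha hb
  rw [mem_T] at hz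
  exact ⟨lt_of_le_of_ne hz.1 (Ne.symm hb), hz.2.1, lt_of_le_of_ne hz.2.2 ha⟩

theorem ae_pi_of {n : ℕ} {p : ℝ × ℝ → Prop} (h : ∀ᵐ z ∂μT, p z) :
    ∀ᵐ ω ∂(Measure.pi fun _ : Fin n => μT), ∀ i, p (ω i) := by
  rw [ae_all_iff]
  intro i
  exact (Measure.quasiMeasurePreserving_eval (fun _ : Fin n => μT) i).ae h

theorem ae_ties {n : ℕ} (i j : Fin (n + 1)) (hij : j ≠ i) :
    ∀ᵐ ω ∂(Measure.pi fun _ : Fin (n + 1) => μT),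
      (ω i).2 * (1 - (ω j).1) ≠ (ω j).2 * (1 - (ω i).1) := by
  obtain ⟨k, rfl⟩ := Fin.exists_succAbove_eq hij
  have hmp := measurePreserving_piFinSuccAbove (fun _ : Fin (n + 1) => μT) i
  have hm : MeasurableSet {p : (ℝ × ℝ) × (Fin n → ℝ × ℝ) |
      p.1.2 * (1 - (p.2 k).1) = (p.2 k).2 * (1 - p.1.1)} :=
    measurableSet_eq_fun (by fun_prop) (by fun_prop)
  have h0 : (μT.prod (Measure.pi fun _ : Fin n => μT)) {p : (ℝ × ℝ) × (Fin n → ℝ × ℝ) |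
      p.1.2 * (1 - (p.2 k).1) = (p.2 k).2 * (1 - p.1.1)} = 0 := by
    rw [Measure.measure_prod_null hm]
    filter_upwards [ae_good] with z hz
    have : Prod.mk z ⁻¹' {p : (ℝ × ℝ) × (Fin n → ℝ × ℝ) |
      p.1.2 * (1 - (p.2 k).1) = (p.2 k).2 * (1 - p.1.1)} =
      Function.eval k ⁻¹' {w : ℝ × ℝ | z.2 * w.1 + (1 - z.1) * w.2 = z.2} := by
      ext w
      simp only [Set.mem_preimage, Set.mem_ofPred_eq, Function.eval]
      constructor <;> intro h <;> linarith
    rw [this]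
    apply Measure.pi_eval_preimage_null
    have hn := null_graph z.2 (1 - z.1) z.2 (by have := hz.2.2; have := hz.2.1; linarith)
    unfold μT
    rw [Measure.smul_apply, smul_eq_mul]
    rw [Measure.restrict_apply' meas_T]
    rw [measure_mono_null Set.inter_subset_left hn, mul_zero]
  have := hmp.quasiMeasurePreserving.ae (compl_mem_ae_iff.2 h0)
  filter_upwards [this] with ω hω
  intro h
  apply hω
  exact h

/-- The event that point `i` is the first vertex of the chain. -/
def EE {n : ℕ} (i : Fin n) : Set (Fin n → ℝ × ℝ) := {ω | ∀ j, ω j ∈ RR (ω i)}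

theorem meas_EE {n : ℕ} (i : Fin n) : MeasurableSet (EE i) := by
  have : EE i = ⋂ j, {ω : Fin n → ℝ × ℝ |
      (ω i).2 * (1 - (ω j).1) ≤ (ω j).2 * (1 - (ω i).1)} := by
    ext ω; simp [EE, RR]
  rw [this]
  exact MeasurableSet.iInter fun j => measurableSet_le (by fun_prop) (by fun_prop)

theorem ae_sum_EE (n : ℕ) (f : (Fin (n + 1) → ℝ × ℝ) → ENNReal) :
    ∀ᵐ ω ∂(Measure.pi fun _ : Fin (n + 1) => μT), f ω = ∑ i, (EE i).indicator f ω := by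
  have ht : ∀ᵐ ω ∂(Measure.pi fun _ : Fin (n + 1) => μT), ∀ i j : Fin (n + 1), j ≠ i →
      (ω i).2 * (1 - (ω j).1) ≠ (ω j).2 * (1 - (ω i).1) := by
    rw [ae_all_iff]; intro i
    rw [ae_all_iff]; intro j
    by_cases hij : j = i
    · simp [hij]
    · filter_upwards [ae_ties i j hij] with ω h _ using h
  filter_upwards [ht, ae_pi_of (n := n + 1) ae_good] with ω h1 h2
  obtain ⟨i, hi⟩ := Finite.exists_min fun i => bet (ω i)
  have hpos : ∀ j, 0 < 1 - (ω j).1 := fun j => by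
    have := (h2 j).2.2; have := (h2 j).2.1; linarith
  have hiE : ω ∈ EE i := by
    intro j
    have := hi j
    unfold bet at this
    rw [div_le_div_iff₀ (hpos i) (hpos j)] at this
    exact this
  rw [Finset.sum_eq_single i]
  · rw [Set.indicator_of_mem hiE]
  · intro j _ hj
    apply Set.indicator_of_notMem
    intro hjE
    have a := hiE j
    have b := hjE i
    simp only [RR, Set.mem_ofPred_eq] at a b
    exact h1 i j hj (le_antisymm a b)
  · simp

theorem EE_symm (n : ℕ) (g : Set (ℝ × ℝ) → ENNReal)
    (hg : Measurable fun ω : Fin (n + 1) → ℝ × ℝ => g (Set.range ω)) (i : Fin (n + 1)) :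
    ∫⁻ ω, (EE i).indicator (fun ω => g (Set.range ω)) ω
      ∂(Measure.pi fun _ : Fin (n + 1) => μT) =
    ∫⁻ ω, (EE 0).indicator (fun ω => g (Set.range ω)) ω
      ∂(Measure.pi fun _ : Fin (n + 1) => μT) := by
  have hmp := measurePreserving_piCongrLeft (fun _ : Fin (n + 1) => μT) (Equiv.swap 0 i)
  rw [← hmp.lintegral_comp (hg.indicator (meas_EE i))]
  refine lintegral_congr fun ω => ?_
  have hω : ∀ j, MeasurableEquiv.piCongrLeft (fun _ : Fin (n + 1) => ℝ × ℝ) (Equiv.swap 0 i) ω j =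
      ω (Equiv.swap 0 i j) := by
    intro j
    have := MeasurableEquiv.piCongrLeft_apply_apply (Equiv.swap 0 i)
      (β := fun _ : Fin (n + 1) => ℝ × ℝ) ω (Equiv.swap 0 i j)
    rwa [Equiv.swap_apply_self] at this
  have hω' : (MeasurableEquiv.piCongrLeft (fun _ : Fin (n + 1) => ℝ × ℝ) (Equiv.swap 0 i) ω) =
      ω ∘ (Equiv.swap 0 i) := funext hω
  rw [hω']
  have hr : Set.range (ω ∘ (Equiv.swap 0 i)) = Set.range ω := (Equiv.swap 0 i).surjective.range_comp ω
  have hE : (ω ∘ (Equiv.swap 0 i)) ∈ EE i ↔ ω ∈ EE 0 := by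
    simp only [EE, Set.mem_ofPred_eq, Function.comp, Equiv.swap_apply_right]
    exact (Equiv.swap 0 i).forall_congr_right (q := fun j => ω j ∈ RR (ω 0))
  by_cases hh : ω ∈ EE 0
  · rw [Set.indicator_of_mem hh, Set.indicator_of_mem (hE.2 hh), hr]
  · rw [Set.indicator_of_notMem hh, Set.indicator_of_notMem (mt hE.1 hh)]

theorem mem_T_ae : ∀ᵐ z ∂μT, z ∈ T := ae_good.mono fun _ h => h.mem_T

/-- The recursion for all moments. -/
theorem moment_rec (k n : ℕ) :
    ∫⁻ ω, W (Set.range ω) ^ k ∂(P (n + 1)) = (n + 1 : ℕ) * ∫⁻ z, ∑ m ∈ Finset.range (n + 1),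
      (n.choose m : ENNReal) * (ENNReal.ofReal (uu z) ^ m * ENNReal.ofReal (tt z) ^ (n - m) *
        ∫⁻ ω, (ENNReal.ofReal (tt z) + ENNReal.ofReal (uu z) * W (Set.range ω)) ^ k ∂(P m)) ∂μT := by
  unfold P
  have hmeas : ∀ m, Measurable fun ω : Fin m → ℝ × ℝ => W (Set.range ω) ^ k :=
    fun m => (measurable_W m).pow_const k
  rw [lintegral_congr_ae (ae_sum_EE n fun ω => W (Set.range ω) ^ k),
    lintegral_finsetSum _ fun i _ => (hmeas _).indicator (meas_EE i)]
  simp_rw [EE_symm n (fun s => W s ^ k) (hmeas _)]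
  rw [Finset.sum_const, Finset.card_univ, Fintype.card_fin, nsmul_eq_mul]
  congr 1
  rw [lint_cons μT n _ ((hmeas _).indicator (meas_EE 0))]
  refine lintegral_congr_ae ?_
  filter_upwards [ae_good] with z hz
  have hA : ∫⁻ ω, (EE 0).indicator (fun ω => W (Set.range ω) ^ k)
        (Fin.cons z ω : Fin (n + 1) → ℝ × ℝ) ∂(Measure.pi fun _ : Fin n => μT) =
      ∫⁻ ω, W (insert z (Set.range ω)) ^ k ∂(Measure.pi fun _ : Fin n => μT.restrict (RR z)) := by
    rw [← Measure.restrict_pi_pi, ← lintegral_indicator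
      (MeasurableSet.univ_pi fun _ => meas_RR z)]
    refine lintegral_congr fun ω => ?_
    have hE : (Fin.cons z ω : Fin (n + 1) → ℝ × ℝ) ∈ EE 0 ↔ ω ∈ Set.univ.pi fun _ => RR z := by
      simp only [EE, Set.mem_ofPred_eq, Fin.cons_zero, Fin.forall_fin_succ, Fin.cons_succ,
        Set.mem_univ_pi]
      constructor
      · exact fun h => h.2
      · exact fun h => ⟨by simp [RR], h⟩
    by_cases hh : ω ∈ Set.univ.pi fun _ => RR z
    · rw [Set.indicator_of_mem hh, Set.indicator_of_mem (hE.2 hh), Fin.range_cons]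
    · rw [Set.indicator_of_notMem hh, Set.indicator_of_notMem (mt hE.1 hh)]
  rw [hA, key (μT.restrict (RR z)) (mu2 z) μT (ENNReal.ofReal (uu z)) (Phi z) (aff_meas ..)
    (restrict_RR hz) n (fun s => W (insert z s) ^ k)]
  · refine Finset.sum_congr rfl fun m _ => ?_
    rw [mu2_univ hz]
    congr 2
    refine lintegral_congr_ae ?_
    filter_upwards [ae_pi_of (n := m) mem_T_ae] with ω hω
    rw [W_step hz _ (by rintro _ ⟨i, rfl⟩; exact hω i)]
  · intro m
    have := (hmeas (m + 1)).comp ((measurable_cons' m).comp (measurable_prodMk_left (x := z)))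
    convert this using 2 with ω
    simp [Fin.range_cons]
  · filter_upwards [mu2_mem hz] with x hx s
    rw [W_insert hx]

theorem beta_int (j : ℕ) : ∀ i : ℕ, ∫ x in (0 : ℝ)..1, x ^ i * (1 - x) ^ j =
    (i.factorial : ℝ) * j.factorial / (i + j + 1).factorial := by
  induction j with
  | zero =>
    intro i
    simp only [pow_zero, mul_one, integral_pow, Nat.factorial_zero, add_zero, Nat.factorial_succ]
    have := Nat.factorial_ne_zero i
    push_cast
    field_simp
    simp
  | succ j ih =>
    intro i
    have hd : ∀ x ∈ Set.uIcc (0 : ℝ) 1, HasDerivAt (fun x : ℝ => x ^ (i + 1) * (1 - x) ^ (j + 1))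
        ((i + 1) * (x ^ i * (1 - x) ^ (j + 1)) - (j + 1) * (x ^ (i + 1) * (1 - x) ^ j)) x := by
      intro x _
      have h1 := hasDerivAt_pow (i + 1) x
      have h2 := ((hasDerivAt_id x).const_sub 1).pow (j + 1)
      refine (h1.mul h2).congr_deriv ?_
      simp
      ring
    have hInt0 := intervalIntegral.integral_eq_sub_of_hasDerivAt hd
      ((by fun_prop : Continuous _).intervalIntegrable _ _)
    rw [intervalIntegral.integral_sub ((by fun_prop : Continuous _).intervalIntegrable _ _)
      ((by fun_prop : Continuous _).intervalIntegrable _ _),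
      intervalIntegral.integral_const_mul, intervalIntegral.integral_const_mul, ih (i + 1)] at hInt0
    have e : i + 1 + j + 1 = i + (j + 1) + 1 := by ring
    simp only [e] at hInt0
    have hi : (0 : ℝ) < i + 1 := by positivity
    have hf : ((i + (j + 1) + 1).factorial : ℝ) ≠ 0 := by positivity
    simp at hInt0
    rw [sub_eq_zero] at hInt0
    apply mul_left_cancel₀ hi.ne'
    rw [hInt0, Nat.factorial_succ i, Nat.factorial_succ j]
    push_cast
    field_simp

theorem meas_uu : Measurable uu := by
  unfold uu bet; fun_prop

theorem meas_tt : Measurable tt := by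
  unfold tt; fun_prop

/-- The basic integrals. -/
def KK (i j : ℕ) : ℝ :=
  2 * ((i.factorial : ℝ) * (j + 1).factorial / ((i + j + 2).factorial * (i + j + 1)))

theorem KK_nonneg (i j : ℕ) : 0 ≤ KK i j := by unfold KK; positivity

theorem inner_int (x : ℝ) (hx0 : 0 ≤ x) (hx : x < 1) (i j : ℕ) :
    ∫⁻ y in Set.Icc (0 : ℝ) (1 - x), ENNReal.ofReal (uu (x, y)) ^ i * ENNReal.ofReal (tt (x, y)) ^ j
      = ENNReal.ofReal (x ^ i * (1 - x) ^ (j + 1) / (i + j + 1)) := by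
  have hx1 : 0 < 1 - x := by linarith
  have h1 : ∀ y ∈ Set.Icc (0 : ℝ) (1 - x),
      ENNReal.ofReal (uu (x, y)) ^ i * ENNReal.ofReal (tt (x, y)) ^ j =
      ENNReal.ofReal ((x / (1 - x)) ^ i * (1 - x - y) ^ (i + j)) := by
    intro y hy
    have h2 : uu (x, y) = x / (1 - x) * (1 - x - y) := by
      simp only [uu, bet]; field_simp
    have h3 : tt (x, y) = 1 - x - y := rfl
    have h4 : 0 ≤ 1 - x - y := by linarith [hy.2]
    have h5 : 0 ≤ x / (1 - x) * (1 - x - y) := by positivity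
    rw [h2, h3, ← ENNReal.ofReal_pow h5, ← ENNReal.ofReal_pow h4,
      ← ENNReal.ofReal_mul (by positivity)]
    congr 1
    rw [mul_pow]; ring
  rw [setLIntegral_congr_fun measurableSet_Icc h1, ← ofReal_integral_eq_lintegral_ofReal]
  · congr 1
    rw [integral_Icc_eq_integral_Ioc, ← intervalIntegral.integral_of_le hx1.le,
      intervalIntegral.integral_const_mul,
      intervalIntegral.integral_comp_sub_left (fun y => y ^ (i + j)) (1 - x), integral_pow]
    simp only [sub_self, sub_zero, Nat.cast_add]
    rw [zero_pow (by omega), div_pow]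
    field_simp
    ring
  · exact (by fun_prop : Continuous _).continuousOn.integrableOn_Icc
  · refine (ae_restrict_iff' measurableSet_Icc).2 (Filter.Eventually.of_forall fun y hy => ?_)
    have h4 : 0 ≤ 1 - x - y := by linarith [hy.2]
    simp only [Pi.zero_apply]
    positivity

theorem lint_KK (i j : ℕ) :
    ∫⁻ z, ENNReal.ofReal (uu z) ^ i * ENNReal.ofReal (tt z) ^ j ∂μT = ENNReal.ofReal (KK i j) := by
  have hm : Measurable fun z => ENNReal.ofReal (uu z) ^ i * ENNReal.ofReal (tt z) ^ j :=
    (meas_uu.ennreal_ofReal.pow_const _).mul (meas_tt.ennreal_ofReal.pow_const _)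
  unfold μT
  rw [lintegral_smul_measure, lint_T _ hm]
  have h1 : ∀ᵐ x ∂(volume.restrict (Set.Icc (0 : ℝ) 1)),
      ∫⁻ y in Set.Icc (0 : ℝ) (1 - x), ENNReal.ofReal (uu (x, y)) ^ i *
        ENNReal.ofReal (tt (x, y)) ^ j
      = ENNReal.ofReal (x ^ i * (1 - x) ^ (j + 1) / (i + j + 1)) := by
    have h2 : ∀ᵐ x : ℝ, x ≠ 1 := by
      refine compl_mem_ae_iff.2 ?_
      change volume {x : ℝ | x = 1} = 0
      simp
    filter_upwards [ae_restrict_mem measurableSet_Icc, ae_restrict_of_ae h2] with x hx hx1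
    exact inner_int x hx.1 (lt_of_le_of_ne hx.2 hx1) i j
  rw [lintegral_congr_ae h1, ← ofReal_integral_eq_lintegral_ofReal]
  · rw [integral_Icc_eq_integral_Ioc, ← intervalIntegral.integral_of_le zero_le_one,
      intervalIntegral.integral_div, beta_int, smul_eq_mul, ← ENNReal.ofReal_ofNat,
      ← ENNReal.ofReal_mul (by norm_num)]
    congr 1
    unfold KK
    have : i + (j + 1) + 1 = i + j + 2 := by ring
    rw [this, div_div]
  · exact (by fun_prop : Continuous _).continuousOn.integrableOn_Icc
  · refine (ae_restrict_iff' measurableSet_Icc).2 (Filter.Eventually.of_forall fun x hx => ?_)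
    have h4 : 0 ≤ 1 - x := by linarith [hx.2]
    have := hx.1
    simp only [Pi.zero_apply]
    positivity

instance (n : ℕ) : IsProbabilityMeasure (P n) := by unfold P; infer_instance

theorem W_le (s : Set (ℝ × ℝ)) (hs : s ⊆ T) : W s ≤ 1 := by
  have hST : convexHull ℝ (s ∪ {(1, 0), (0, 1)}) ⊆ T := by
    apply convexHull_min _ convex_T
    refine Set.union_subset hs ?_
    rintro w (rfl | rfl) <;> rw [mem_T] <;> simp
  unfold W
  calc _ ≤ 2 * volume T := by gcongr
    _ = 1 := by
      rw [vol_T, ← ENNReal.ofReal_ofNat, ← ENNReal.ofReal_mul (by norm_num)]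
      norm_num

theorem W_le_ae (n : ℕ) : ∀ᵐ ω ∂(P n), W (Set.range ω) ≤ 1 := by
  unfold P
  filter_upwards [ae_pi_of (n := n) mem_T_ae] with ω hω
  exact W_le _ (by rintro _ ⟨i, rfl⟩; exact hω i)

/-- Moments in `ENNReal`. -/
def JJ (k n : ℕ) : ENNReal := ∫⁻ ω, W (Set.range ω) ^ k ∂(P n)

theorem JJ_ne_top (k n : ℕ) : JJ k n ≠ ⊤ := by
  have : JJ k n ≤ 1 := by
    unfold JJ
    calc _ ≤ ∫⁻ ω, 1 ∂(P n) := by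
          refine lintegral_mono_ae ?_
          filter_upwards [W_le_ae n] with ω h
          exact pow_le_one' h k
      _ = 1 := by simp
  exact ne_top_of_le_ne_top ENNReal.one_ne_top this

theorem meas_ut (i j : ℕ) :
    Measurable fun z => ENNReal.ofReal (uu z) ^ i * ENNReal.ofReal (tt z) ^ j :=
  (meas_uu.ennreal_ofReal.pow_const _).mul (meas_tt.ennreal_ofReal.pow_const _)

theorem JJ1_rec (n : ℕ) : JJ 1 (n + 1) = (n + 1 : ℕ) * ∑ m ∈ Finset.range (n + 1),
    (n.choose m : ENNReal) * (ENNReal.ofReal (KK m (n - m + 1)) +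
      ENNReal.ofReal (KK (m + 1) (n - m)) * JJ 1 m) := by
  rw [JJ, moment_rec]
  congr 1
  have h : ∀ z : ℝ × ℝ, ∀ m, ∫⁻ ω, (ENNReal.ofReal (tt z) + ENNReal.ofReal (uu z) *
      W (Set.range ω)) ^ 1 ∂(P m) = ENNReal.ofReal (tt z) + ENNReal.ofReal (uu z) * JJ 1 m := by
    intro z m
    simp only [pow_one, JJ]
    rw [lintegral_add_left measurable_const, lintegral_const_mul _ (measurable_W m)]
    simp
  simp_rw [h]
  have h' : ∀ z m, (n.choose m : ENNReal) * (ENNReal.ofReal (uu z) ^ m *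
      ENNReal.ofReal (tt z) ^ (n - m) * (ENNReal.ofReal (tt z) + ENNReal.ofReal (uu z) * JJ 1 m)) =
      (n.choose m : ENNReal) *
      (ENNReal.ofReal (uu z) ^ m * ENNReal.ofReal (tt z) ^ (n - m + 1) +
       (ENNReal.ofReal (uu z) ^ (m + 1) * ENNReal.ofReal (tt z) ^ (n - m)) * JJ 1 m) := by
    intro z m; ring
  simp_rw [h']
  rw [lintegral_finsetSum]
  · refine Finset.sum_congr rfl fun m _ => ?_
    rw [lintegral_const_mul, lintegral_add_left (meas_ut _ _),
      lintegral_mul_const _ (meas_ut _ _), lint_KK, lint_KK]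
    exact (meas_ut _ _).add ((meas_ut _ _).mul_const _)
  · intro m _
    exact ((meas_ut _ _).add ((meas_ut _ _).mul_const _)).const_mul _

theorem JJ2_rec (n : ℕ) : JJ 2 (n + 1) = (n + 1 : ℕ) * ∑ m ∈ Finset.range (n + 1),
    (n.choose m : ENNReal) * (ENNReal.ofReal (KK m (n - m + 2)) +
      (ENNReal.ofReal (KK (m + 1) (n - m + 1)) * (2 * JJ 1 m) +
       ENNReal.ofReal (KK (m + 2) (n - m)) * JJ 2 m)) := by
  rw [JJ, moment_rec]
  congr 1
  have h : ∀ z : ℝ × ℝ, ∀ m, ∫⁻ ω, (ENNReal.ofReal (tt z) + ENNReal.ofReal (uu z) *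
      W (Set.range ω)) ^ 2 ∂(P m) = ENNReal.ofReal (tt z) ^ 2 +
        (2 * ENNReal.ofReal (tt z) * ENNReal.ofReal (uu z) * JJ 1 m +
        ENNReal.ofReal (uu z) ^ 2 * JJ 2 m) := by
    intro z m
    have e : ∀ ω : Fin m → ℝ × ℝ, (ENNReal.ofReal (tt z) + ENNReal.ofReal (uu z) *
      W (Set.range ω)) ^ 2 = ENNReal.ofReal (tt z) ^ 2 +
        (2 * ENNReal.ofReal (tt z) * ENNReal.ofReal (uu z) * W (Set.range ω) +
        ENNReal.ofReal (uu z) ^ 2 * W (Set.range ω) ^ 2) := by intro ω; ring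
    simp_rw [e]
    simp only [pow_one, JJ]
    rw [lintegral_add_left measurable_const, lintegral_add_left ((measurable_W m).const_mul _),
      lintegral_const_mul _ (measurable_W m), lintegral_const_mul _ ((measurable_W m).pow_const 2)]
    simp
  simp_rw [h]
  have h' : ∀ z m, (n.choose m : ENNReal) * (ENNReal.ofReal (uu z) ^ m *
      ENNReal.ofReal (tt z) ^ (n - m) * (ENNReal.ofReal (tt z) ^ 2 +
        (2 * ENNReal.ofReal (tt z) * ENNReal.ofReal (uu z) * JJ 1 m +
        ENNReal.ofReal (uu z) ^ 2 * JJ 2 m))) =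
      (n.choose m : ENNReal) *
      (ENNReal.ofReal (uu z) ^ m * ENNReal.ofReal (tt z) ^ (n - m + 2) +
       ((ENNReal.ofReal (uu z) ^ (m + 1) * ENNReal.ofReal (tt z) ^ (n - m + 1)) * (2 * JJ 1 m) +
       (ENNReal.ofReal (uu z) ^ (m + 2) * ENNReal.ofReal (tt z) ^ (n - m)) * JJ 2 m)) := by
    intro z m; ring
  simp_rw [h']
  rw [lintegral_finsetSum]
  · refine Finset.sum_congr rfl fun m _ => ?_
    rw [lintegral_const_mul, lintegral_add_left (meas_ut _ _),
      lintegral_add_left ((meas_ut _ _).mul_const _),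
      lintegral_mul_const _ (meas_ut _ _), lintegral_mul_const _ (meas_ut _ _),
      lint_KK, lint_KK, lint_KK]
    exact (meas_ut _ _).add (((meas_ut _ _).mul_const _).add ((meas_ut _ _).mul_const _))
  · intro m _
    exact ((meas_ut _ _).add (((meas_ut _ _).mul_const _).add
      ((meas_ut _ _).mul_const _))).const_mul _

/-- Real moments. -/
def mom (k n : ℕ) : ℝ := (JJ k n).toReal

theorem mom1_rec (n : ℕ) : mom 1 (n + 1) = (n + 1) * ∑ m ∈ Finset.range (n + 1),
    (n.choose m : ℝ) * (KK m (n - m + 1) + KK (m + 1) (n - m) * mom 1 m) := by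
  have hfin : ∀ m, ENNReal.ofReal (KK (m + 1) (n - m)) * JJ 1 m ≠ ⊤ :=
    fun m => ENNReal.mul_ne_top ENNReal.ofReal_ne_top (JJ_ne_top _ _)
  rw [mom, JJ1_rec, ENNReal.toReal_mul, ENNReal.toReal_sum]
  · simp only [Nat.cast_add, Nat.cast_one]
    congr 1
    refine Finset.sum_congr rfl fun m _ => ?_
    rw [ENNReal.toReal_mul, ENNReal.toReal_add ENNReal.ofReal_ne_top (hfin m), ENNReal.toReal_mul,
      ENNReal.toReal_ofReal (KK_nonneg _ _), ENNReal.toReal_ofReal (KK_nonneg _ _)]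
    simp [mom]
  · intro m _
    exact ENNReal.mul_ne_top (ENNReal.natCast_ne_top _)
      (ENNReal.add_ne_top.2 ⟨ENNReal.ofReal_ne_top, hfin m⟩)

theorem mom2_rec (n : ℕ) : mom 2 (n + 1) = (n + 1) * ∑ m ∈ Finset.range (n + 1),
    (n.choose m : ℝ) * (KK m (n - m + 2) + (KK (m + 1) (n - m + 1) * (2 * mom 1 m) +
      KK (m + 2) (n - m) * mom 2 m)) := by
  have hfin1 : ∀ m, ENNReal.ofReal (KK (m + 1) (n - m + 1)) * (2 * JJ 1 m) ≠ ⊤ :=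
    fun m => ENNReal.mul_ne_top ENNReal.ofReal_ne_top
      (ENNReal.mul_ne_top (by simp) (JJ_ne_top _ _))
  have hfin2 : ∀ m, ENNReal.ofReal (KK (m + 2) (n - m)) * JJ 2 m ≠ ⊤ :=
    fun m => ENNReal.mul_ne_top ENNReal.ofReal_ne_top (JJ_ne_top _ _)
  have hfin : ∀ m, ENNReal.ofReal (KK (m + 1) (n - m + 1)) * (2 * JJ 1 m) +
      ENNReal.ofReal (KK (m + 2) (n - m)) * JJ 2 m ≠ ⊤ :=
    fun m => ENNReal.add_ne_top.2 ⟨hfin1 m, hfin2 m⟩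
  rw [mom, JJ2_rec, ENNReal.toReal_mul, ENNReal.toReal_sum]
  · simp only [Nat.cast_add, Nat.cast_one]
    congr 1
    refine Finset.sum_congr rfl fun m _ => ?_
    rw [ENNReal.toReal_mul, ENNReal.toReal_add ENNReal.ofReal_ne_top (hfin m),
      ENNReal.toReal_add (hfin1 m) (hfin2 m), ENNReal.toReal_mul, ENNReal.toReal_mul,
      ENNReal.toReal_mul,
      ENNReal.toReal_ofReal (KK_nonneg _ _), ENNReal.toReal_ofReal (KK_nonneg _ _),
      ENNReal.toReal_ofReal (KK_nonneg _ _)]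
    simp [mom]
  · intro m _
    exact ENNReal.mul_ne_top (ENNReal.natCast_ne_top _)
      (ENNReal.add_ne_top.2 ⟨ENNReal.ofReal_ne_top, hfin m⟩)

theorem V_eq (n : ℕ) (ω : Fin n → ℝ × ℝ) : V n ω = (W (Set.range ω)).toReal := by
  unfold V W Tchain
  rw [ENNReal.toReal_mul]; simp

theorem int_V (n : ℕ) : ∫ ω, (V n ω) ^ 2 ∂ P n = mom 2 n := by
  simp_rw [V_eq, ← ENNReal.toReal_pow]
  rw [integral_toReal]
  · rfl
  · exact ((measurable_W n).pow_const 2).aemeasurable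
  · filter_upwards [W_le_ae n] with ω h
    exact (pow_le_one' h 2).trans_lt ENNReal.one_lt_top

theorem int_vol (n : ℕ) : ∫ ω, (volume (Tchain n ω)).toReal ^ 2 ∂ P n = mom 2 n / 4 := by
  rw [← int_V, ← integral_div]
  congr 1
  ext ω
  unfold V; ring

theorem mom_zero (k : ℕ) (hk : k ≠ 0) : mom k 0 = 0 := by
  have hW : ∀ ω : Fin 0 → ℝ × ℝ, W (Set.range ω) = 0 := by
    intro ω
    unfold W
    rw [Set.range_eq_empty, Set.empty_union]
    have : convexHull ℝ {((1 : ℝ), (0 : ℝ)), (0, 1)} ⊆ {z : ℝ × ℝ | 1 * z.1 + 1 * z.2 = 1} := by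
      apply convexHull_min
      · rintro w (rfl | rfl) <;> simp
      · intro p hp q hq s t hs ht hst
        simp only [Set.mem_ofPred_eq, Prod.fst_add, Prod.smul_fst, smul_eq_mul, Prod.snd_add,
          Prod.smul_snd] at *
        linear_combination s * hp + t * hq + hst
    rw [measure_mono_null this (null_graph 1 1 1 one_ne_zero), mul_zero]
  have h0 : W ∅ = 0 := by simpa using hW ![]
  simp [mom, JJ, h0, hk]

theorem H_succ (j : ℕ) : H (j + 1) = H j + 1 / ((j : ℝ) + 1) := by
  simp [H, Finset.sum_range_succ]

theorem H2_succ (j : ℕ) : H2 (j + 1) = H2 j + 1 / ((j : ℝ) + 1) ^ 2 := by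
  simp [H2, Finset.sum_range_succ]

theorem H_two : H 2 = 3 / 2 := by
  norm_num [H, Finset.sum_range_succ]

theorem H2_two : H2 2 = 5 / 4 := by
  norm_num [H2, Finset.sum_range_succ]

/-- closed form of the first moment -/
def aC (m : ℕ) : ℝ := 1 - (2 * (H (m + 2) - 1 / ((m : ℝ) + 2)) + 1) / (3 * ((m : ℝ) + 1))

/-- closed form of the second moment -/
def bC (n : ℕ) : ℝ := 1 - (18 * (n : ℝ) ^ 2 + 106 * n + 144) /
            (27 * ((n : ℝ) + 1) * ((n : ℝ) + 2) * ((n : ℝ) + 3))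
          - (36 * (n : ℝ) + 32) * H (n + 2) / (27 * ((n : ℝ) + 1) * ((n : ℝ) + 2))
          + 4 * (H (n + 2) ^ 2 + H2 (n + 2)) / (9 * ((n : ℝ) + 1) * ((n : ℝ) + 2))

theorem sum1 (x : ℝ) (M : ℕ) :
    ∑ m ∈ Finset.range M, ((x - m + 1) * (x - m + 2) + ((m : ℝ) + 1) * (x - m + 1) * aC m)
    = (3 + 4/3 * x + 29/6 * (M:ℝ) + 29/6 * (M:ℝ) * x + (M:ℝ) * x^2 - 3/2 * (M:ℝ)^2
        - 1/2 * (M:ℝ)^2 * x)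
      + (-4/3 - 2/3 * x - (M:ℝ) - 2/3 * (M:ℝ) * x + 1/3 * (M:ℝ)^2) * H (M+2)
      + (-2 - 2/3 * x)/((M:ℝ)+2) := by
  induction M with
  | zero => simp [H_two]; ring
  | succ M ih =>
    rw [Finset.sum_range_succ, ih, show M + 1 + 2 = (M + 2) + 1 by ring, H_succ (M + 2), aC]
    have h1 : (M : ℝ) + 1 ≠ 0 := by positivity
    have h2 : (M : ℝ) + 2 ≠ 0 := by positivity
    have h3 : (M : ℝ) + 3 ≠ 0 := by positivity
    have e3 : (M : ℝ) + 2 + 1 = M + 3 := by ring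
    have e4 : (M : ℝ) + 1 + 2 = M + 3 := by ring
    push_cast
    rw [e3, e4]
    field_simp
    ring

theorem sum2 (x : ℝ) (M : ℕ) :
    ∑ m ∈ Finset.range M, ((x - m + 1) * (x - m + 2) * (x - m + 3)
      + 2 * ((m : ℝ) + 1) * (x - m + 1) * (x - m + 2) * aC m
      + ((m : ℝ) + 1) * ((m : ℝ) + 2) * (x - m + 1) * bC m)
    = (130/9 + 112/9 * x + 8/3 * x^2 + 151/9 * (M:ℝ) + 1259/54 * (M:ℝ) * x
        + 55/6 * (M:ℝ) * x^2 + (M:ℝ) * x^3 - 43/9 * (M:ℝ)^2 - 7/2 * (M:ℝ)^2 * x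
        - 1/2 * (M:ℝ)^2 * x^2)
      + (-256/27 - 196/27 * x - 4/3 * x^2 - 70/9 * (M:ℝ) - 182/27 * (M:ℝ) * x
        - 4/3 * (M:ℝ) * x^2 + 58/27 * (M:ℝ)^2 + 2/3 * (M:ℝ)^2 * x) * H (M+2)
      + (20/9 + 8/9 * x + 2/3 * (M:ℝ) + 4/9 * (M:ℝ) * x - 2/9 * (M:ℝ)^2)
        * (H (M+2)^2 + H2 (M+2))
      + (-16 - 28/3 * x - 4/3 * x^2)/((M:ℝ)+2) := by
  induction M with
  | zero => simp [H_two, H2_two]; ring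
  | succ M ih =>
    rw [Finset.sum_range_succ, ih, show M + 1 + 2 = (M + 2) + 1 by ring, H_succ (M + 2), H2_succ (M + 2), aC, bC]
    have h1 : (M : ℝ) + 1 ≠ 0 := by positivity
    have h2 : (M : ℝ) + 2 ≠ 0 := by positivity
    have h3 : (M : ℝ) + 3 ≠ 0 := by positivity
    have e3 : (M : ℝ) + 2 + 1 = M + 3 := by ring
    have e4 : (M : ℝ) + 1 + 2 = M + 3 := by ring
    push_cast
    rw [e3, e4]
    field_simp
    ring

theorem coef_gen (m d i j : ℕ) :
    (((m + d).choose m : ℕ) : ℝ) * KK (m + i) (d + j)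
      = 2 * (((m + d).factorial : ℝ) * (m + i).factorial * (d + j + 1).factorial /
        (m.factorial * d.factorial * ((m + i + (d + j) + 2).factorial
          * ((m : ℝ) + i + (d + j) + 1)))) := by
  have h1 : (m.factorial : ℝ) ≠ 0 := by positivity
  have h2 : (d.factorial : ℝ) ≠ 0 := by positivity
  have h3 : ((m + i + (d + j) + 2).factorial : ℝ) ≠ 0 := by positivity
  have h4 : ((m : ℝ) + i + (d + j) + 1) ≠ 0 := by positivity
  rw [Nat.cast_add_choose, KK]
  push_cast
  field_simp

theorem coef10 (m d : ℕ) : (((m + d).choose m : ℕ) : ℝ) * KK m (d + 1)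
    = 2 * ((d : ℝ) + 1) * (d + 2) / (((m : ℝ) + d + 1) * (m + d + 2) ^ 2 * (m + d + 3)) := by
  have := coef_gen m d 0 1
  rw [show m + 0 + (d + 1) + 2 = m + d + 1 + 1 + 1 by ring, add_zero] at this
  rw [this]
  simp only [Nat.factorial_succ]
  push_cast
  have h1 : (m.factorial : ℝ) ≠ 0 := by positivity
  have h2 : (d.factorial : ℝ) ≠ 0 := by positivity
  have h3 : ((m + d).factorial : ℝ) ≠ 0 := by positivity
  have e1 : (m : ℝ) + 0 + (d + 1) + 1 = m + d + 2 := by ring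
  have e2 : (m : ℝ) + d + 1 + 1 = m + d + 2 := by ring
  have e3 : (m : ℝ) + d + 2 + 1 = m + d + 3 := by ring
  have e4 : (d : ℝ) + 1 + 1 = d + 2 := by ring
  simp only [e1, e2, e3, e4]
  field_simp

theorem coef11 (m d : ℕ) : (((m + d).choose m : ℕ) : ℝ) * KK (m + 1) d
    = 2 * ((m : ℝ) + 1) * (d + 1) / (((m : ℝ) + d + 1) * (m + d + 2) ^ 2 * (m + d + 3)) := by
  have := coef_gen m d 1 0
  rw [show m + 1 + (d + 0) + 2 = m + d + 1 + 1 + 1 by ring, add_zero] at this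
  rw [this]
  simp only [Nat.factorial_succ]
  push_cast
  have h1 : (m.factorial : ℝ) ≠ 0 := by positivity
  have h2 : (d.factorial : ℝ) ≠ 0 := by positivity
  have h3 : ((m + d).factorial : ℝ) ≠ 0 := by positivity
  have e1 : (m : ℝ) + 1 + (d + 0) + 1 = m + d + 2 := by ring
  have e2 : (m : ℝ) + d + 1 + 1 = m + d + 2 := by ring
  have e3 : (m : ℝ) + d + 2 + 1 = m + d + 3 := by ring
  simp only [e1, e2, e3]
  field_simp

theorem coef20 (m d : ℕ) : (((m + d).choose m : ℕ) : ℝ) * KK m (d + 2)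
    = 2 * ((d : ℝ) + 1) * (d + 2) * (d + 3) /
      (((m : ℝ) + d + 1) * (m + d + 2) * (m + d + 3) ^ 2 * (m + d + 4)) := by
  have := coef_gen m d 0 2
  rw [show m + 0 + (d + 2) + 2 = m + d + 1 + 1 + 1 + 1 by ring, add_zero] at this
  rw [this]
  simp only [Nat.factorial_succ]
  push_cast
  have h1 : (m.factorial : ℝ) ≠ 0 := by positivity
  have h2 : (d.factorial : ℝ) ≠ 0 := by positivity
  have h3 : ((m + d).factorial : ℝ) ≠ 0 := by positivity
  have e1 : (m : ℝ) + 0 + (d + 2) + 1 = m + d + 3 := by ring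
  have e2 : (m : ℝ) + d + 1 + 1 = m + d + 2 := by ring
  have e3 : (m : ℝ) + d + 2 + 1 = m + d + 3 := by ring
  have e4 : (m : ℝ) + d + 3 + 1 = m + d + 4 := by ring
  have e5 : (d : ℝ) + 1 + 1 = d + 2 := by ring
  have e6 : (d : ℝ) + 2 + 1 = d + 3 := by ring
  simp only [e1, e2, e3, e4, e5, e6]
  field_simp

theorem coef21 (m d : ℕ) : (((m + d).choose m : ℕ) : ℝ) * KK (m + 1) (d + 1)
    = 2 * ((m : ℝ) + 1) * (d + 1) * (d + 2) /
      (((m : ℝ) + d + 1) * (m + d + 2) * (m + d + 3) ^ 2 * (m + d + 4)) := by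
  have := coef_gen m d 1 1
  rw [show m + 1 + (d + 1) + 2 = m + d + 1 + 1 + 1 + 1 by ring] at this
  rw [this]
  simp only [Nat.factorial_succ]
  push_cast
  have h1 : (m.factorial : ℝ) ≠ 0 := by positivity
  have h2 : (d.factorial : ℝ) ≠ 0 := by positivity
  have h3 : ((m + d).factorial : ℝ) ≠ 0 := by positivity
  have e1 : (m : ℝ) + 1 + (d + 1) + 1 = m + d + 3 := by ring
  have e2 : (m : ℝ) + d + 1 + 1 = m + d + 2 := by ring
  have e3 : (m : ℝ) + d + 2 + 1 = m + d + 3 := by ring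
  have e4 : (m : ℝ) + d + 3 + 1 = m + d + 4 := by ring
  have e5 : (d : ℝ) + 1 + 1 = d + 2 := by ring
  simp only [e1, e2, e3, e4, e5]
  field_simp

theorem coef22 (m d : ℕ) : (((m + d).choose m : ℕ) : ℝ) * KK (m + 2) d
    = 2 * ((m : ℝ) + 1) * (m + 2) * (d + 1) /
      (((m : ℝ) + d + 1) * (m + d + 2) * (m + d + 3) ^ 2 * (m + d + 4)) := by
  have := coef_gen m d 2 0
  rw [show m + 2 + (d + 0) + 2 = m + d + 1 + 1 + 1 + 1 by ring, add_zero] at this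
  rw [this]
  simp only [Nat.factorial_succ]
  push_cast
  have h1 : (m.factorial : ℝ) ≠ 0 := by positivity
  have h2 : (d.factorial : ℝ) ≠ 0 := by positivity
  have h3 : ((m + d).factorial : ℝ) ≠ 0 := by positivity
  have e1 : (m : ℝ) + 2 + (d + 0) + 1 = m + d + 3 := by ring
  have e2 : (m : ℝ) + d + 1 + 1 = m + d + 2 := by ring
  have e3 : (m : ℝ) + d + 2 + 1 = m + d + 3 := by ring
  have e4 : (m : ℝ) + d + 3 + 1 = m + d + 4 := by ring
  have e5 : (m : ℝ) + 1 + 1 = m + 2 := by ring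
  simp only [e1, e2, e3, e4, e5]
  field_simp

theorem mom1_closed (n : ℕ) : mom 1 n = aC n := by
  induction n using Nat.strong_induction_on with
  | _ n ih =>
    rcases n with _ | n
    · rw [mom_zero 1 one_ne_zero, aC, zero_add, H_two]
      norm_num
    · have hs : ∀ m ∈ Finset.range (n + 1),
          (n.choose m : ℝ) * (KK m (n - m + 1) + KK (m + 1) (n - m) * mom 1 m)
          = 2 / (((n : ℝ) + 1) * (n + 2) ^ 2 * (n + 3)) *
            (((n : ℝ) - m + 1) * (n - m + 2) + ((m : ℝ) + 1) * (n - m + 1) * aC m) := by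
        intro m hm
        have hm' := Finset.mem_range.1 hm
        rw [ih m hm']
        obtain ⟨d, rfl⟩ := Nat.exists_eq_add_of_le (Nat.lt_succ_iff.1 hm')
        rw [Nat.add_sub_cancel_left, mul_add, ← mul_assoc, coef10, coef11]
        push_cast
        ring
      rw [mom1_rec, Finset.sum_congr rfl hs, ← Finset.mul_sum, sum1, aC,
        show n + 1 + 2 = n + 3 by ring]
      have h1 : (n : ℝ) + 1 ≠ 0 := by positivity
      have h2 : (n : ℝ) + 2 ≠ 0 := by positivity
      have h3 : (n : ℝ) + 3 ≠ 0 := by positivity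
      push_cast
      have e1 : (n : ℝ) + 1 + 1 = n + 2 := by ring
      have e2 : (n : ℝ) + 1 + 2 = n + 3 := by ring
      rw [e1, e2]
      field_simp
      ring

theorem mom2_closed (n : ℕ) : mom 2 n = bC n := by
  induction n using Nat.strong_induction_on with
  | _ n ih =>
    rcases n with _ | n
    · rw [mom_zero 2 two_ne_zero, bC, zero_add, H_two, H2_two]
      norm_num
    · have hs : ∀ m ∈ Finset.range (n + 1),
          (n.choose m : ℝ) * (KK m (n - m + 2) + (KK (m + 1) (n - m + 1) * (2 * mom 1 m)
            + KK (m + 2) (n - m) * mom 2 m))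
          = 2 / (((n : ℝ) + 1) * (n + 2) * (n + 3) ^ 2 * (n + 4)) *
            (((n : ℝ) - m + 1) * (n - m + 2) * (n - m + 3)
              + 2 * ((m : ℝ) + 1) * (n - m + 1) * (n - m + 2) * aC m
              + ((m : ℝ) + 1) * ((m : ℝ) + 2) * (n - m + 1) * bC m) := by
        intro m hm
        have hm' := Finset.mem_range.1 hm
        rw [ih m hm', mom1_closed]
        obtain ⟨d, rfl⟩ := Nat.exists_eq_add_of_le (Nat.lt_succ_iff.1 hm')
        rw [Nat.add_sub_cancel_left, mul_add, mul_add, ← mul_assoc _ (KK (m + 1) _), ← mul_assoc _ (KK (m + 2) _), coef20, coef21,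
          coef22]
        push_cast
        ring
      rw [mom2_rec, Finset.sum_congr rfl hs, ← Finset.mul_sum, sum2, bC,
        show n + 1 + 2 = n + 3 by ring]
      have h1 : (n : ℝ) + 1 ≠ 0 := by positivity
      have h2 : (n : ℝ) + 2 ≠ 0 := by positivity
      have h3 : (n : ℝ) + 3 ≠ 0 := by positivity
      have h4 : (n : ℝ) + 4 ≠ 0 := by positivity
      push_cast
      have e1 : (n : ℝ) + 1 + 1 = n + 2 := by ring
      have e2 : (n : ℝ) + 1 + 2 = n + 3 := by ring
      have e3 : (n : ℝ) + 1 + 3 = n + 4 := by ring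
      rw [e1, e2, e3]
      field_simp
      ring

/-- exact formula for the second moment of the area. -/
theorem stmt14 (n : ℕ) :
    (∫ ω, (volume (Tchain n ω)).toReal ^ 2 ∂ P n
        = 1 / 4 - (9 * (n : ℝ) ^ 2 + 53 * n + 72) /
            (54 * ((n : ℝ) + 1) * ((n : ℝ) + 2) * ((n : ℝ) + 3))
          - (9 * (n : ℝ) + 8) * H (n + 2) / (27 * ((n : ℝ) + 1) * ((n : ℝ) + 2))
          + (H (n + 2) ^ 2 + H2 (n + 2)) / (9 * ((n : ℝ) + 1) * ((n : ℝ) + 2))) ∧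
    (∫ ω, (V n ω) ^ 2 ∂ P n
        = 1 - (18 * (n : ℝ) ^ 2 + 106 * n + 144) /
            (27 * ((n : ℝ) + 1) * ((n : ℝ) + 2) * ((n : ℝ) + 3))
          - (36 * (n : ℝ) + 32) * H (n + 2) / (27 * ((n : ℝ) + 1) * ((n : ℝ) + 2))
          + 4 * (H (n + 2) ^ 2 + H2 (n + 2)) / (9 * ((n : ℝ) + 1) * ((n : ℝ) + 2))) := by
  have h1 : (n : ℝ) + 1 ≠ 0 := by positivity
  have h2 : (n : ℝ) + 2 ≠ 0 := by positivity
  have h3 : (n : ℝ) + 3 ≠ 0 := by positivity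
  refine ⟨?_, ?_⟩
  · rw [int_vol, mom2_closed, bC]
    field_simp
    ring
  · rw [int_V, mom2_closed, bC]

end
end

section
/- For every integer n ≥ 0 the variance of the area of the random convex chain satisfies var(vol(T_n)) = (7n² + 24n + 14)·H_{n+1}/(27(n+1)²(n+2)²) − H_{n+1}²/(9(n+1)²(n+2)) + H^{(2)}_{n+1}/(9(n+1)(n+2)) − (55n⁴ + 391n³ + 962n² + 956n + 336)/(108(n+1)²(n+2)³(n+3)). -/
open MeasureTheory

noncomputable section

section A1
open Set
namespace RC

def T0 : Set (ℝ × ℝ) := {z | 0 < z.1 ∧ 0 < z.2 ∧ z.1 + z.2 < 1}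

lemma measurableSet_T0 : MeasurableSet T0 := by
  unfold T0
  apply MeasurableSet.inter
  · exact measurableSet_lt measurable_const measurable_fst
  apply MeasurableSet.inter
  · exact measurableSet_lt measurable_const measurable_snd
  · exact measurableSet_lt (measurable_fst.add measurable_snd) measurable_const

lemma T_eq : T = {z : ℝ × ℝ | 0 ≤ z.1 ∧ 0 ≤ z.2 ∧ z.1 + z.2 ≤ 1} := by
  apply Subset.antisymm
  · apply convexHull_min
    · rintro z (rfl | rfl | rfl) <;> simp
    · rintro ⟨a, b⟩ ⟨h1, h2, h3⟩ ⟨c, d⟩ ⟨k1, k2, k3⟩ s t hs ht hst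
      simp only [Prod.smul_mk, smul_eq_mul, Prod.mk_add_mk, mem_ofPred_eq] at *
      refine ⟨by positivity, by positivity, ?_⟩
      nlinarith
  · rintro ⟨x, y⟩ ⟨h1, h2, h3⟩
    simp only at h1 h2 h3
    have hc := convex_convexHull ℝ ({(0, 0), (1, 0), (0, 1)} : Set (ℝ × ℝ))
    have hm : ∀ z ∈ ({(0, 0), (1, 0), (0, 1)} : Set (ℝ × ℝ)), z ∈ T :=
      fun z hz => subset_convexHull ℝ _ hz
    have := hc.sum_mem (t := (Finset.univ : Finset (Fin 3)))
      (w := ![1 - x - y, x, y]) (z := ![(0, 0), (1, 0), (0, 1)]) ?_ ?_ ?_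
    · unfold T; simpa [Fin.sum_univ_three] using this
    · intro i _; fin_cases i <;> simp <;> linarith
    · simp [Fin.sum_univ_three]; ring
    · intro i _; fin_cases i <;> apply hm <;> simp

lemma line_null1 (f : ℝ → ℝ) (hf : Measurable f) : volume {z : ℝ × ℝ | z.1 = f z.2} = 0 := by
  have hm : MeasurableSet {z : ℝ × ℝ | z.1 = f z.2} :=
    measurableSet_eq_fun measurable_fst (hf.comp measurable_snd)
  rw [Measure.volume_eq_prod, Measure.prod_apply_symm hm]
  simp

lemma line_null2 (c : ℝ) : volume {z : ℝ × ℝ | z.2 = c} = 0 := by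
  have hm : MeasurableSet {z : ℝ × ℝ | z.2 = c} :=
    measurableSet_eq_fun measurable_snd measurable_const
  rw [Measure.volume_eq_prod, Measure.prod_apply hm]
  simp

lemma T0_ae : (T0 : Set (ℝ × ℝ)) =ᵐ[volume] T := by
  have hsub : T0 ⊆ T := by
    rw [T_eq]; rintro z ⟨h1, h2, h3⟩; exact ⟨h1.le, h2.le, h3.le⟩
  apply ae_eq_set.2 ⟨by rw [sdiff_eq_empty.2 hsub]; simp, ?_⟩
  refine measure_mono_null (t := {z : ℝ × ℝ | z.1 = (fun _ => 0) z.2} ∪ {z : ℝ × ℝ | z.2 = 0} ∪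
    {z : ℝ × ℝ | z.1 = (fun y => 1 - y) z.2}) ?_ ?_
  · rw [T_eq]
    rintro z ⟨⟨h1, h2, h3⟩, h⟩
    by_contra hc
    simp only [mem_union, mem_ofPred_eq, not_or] at hc
    obtain ⟨⟨a, b⟩, c⟩ := hc
    exact h ⟨lt_of_le_of_ne h1 (Ne.symm a), lt_of_le_of_ne h2 (Ne.symm b),
      lt_of_le_of_ne h3 (fun h => c (by linarith))⟩
  · simp only [measure_union_null_iff]
    exact ⟨⟨line_null1 _ measurable_const, line_null2 0⟩, line_null1 _ (by fun_prop)⟩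

lemma μT_eq : μT = (2 : ENNReal) • volume.restrict T0 := by
  unfold μT
  rw [Measure.restrict_congr_set T0_ae]

lemma scale_lint (g : ℝ → ENNReal) (hg : Measurable g) {r : ℝ} (hr : 0 < r) :
    ∫⁻ x, g x = ENNReal.ofReal r * ∫⁻ p, g (r * p) := by
  have h := Real.smul_map_volume_mul_left hr.ne'
  conv_lhs => rw [← h, lintegral_smul_measure, lintegral_map hg (by fun_prop), abs_of_pos hr]
  rfl

lemma lint_T0 (f : ℝ × ℝ → ENNReal) (hf : Measurable f) :
    ∫⁻ z in T0, f z = ∫⁻ r in Ioo (0:ℝ) 1, ENNReal.ofReal r *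
      ∫⁻ p in Ioo (0:ℝ) 1, f (r * p, 1 - r) := by
  rw [← lintegral_indicator measurableSet_T0, Measure.volume_eq_prod,
    lintegral_prod_symm' _ (hf.indicator measurableSet_T0),
    ← lintegral_sub_left_eq_self _ (1:ℝ), ← lintegral_indicator measurableSet_Ioo]
  congr 1; ext r
  by_cases hr : r ∈ Ioo (0:ℝ) 1
  · rw [indicator_of_mem hr]
    rw [scale_lint _ ?_ hr.1, ← lintegral_indicator measurableSet_Ioo]
    · congr 2; ext p
      by_cases hp : p ∈ Ioo (0:ℝ) 1
      · rw [indicator_of_mem hp, indicator_of_mem]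
        refine ⟨mul_pos hr.1 hp.1, by simpa using hr.2, ?_⟩
        simp only; nlinarith [hr.1, hp.2]
      · rw [indicator_of_notMem hp, indicator_of_notMem]
        rintro ⟨h1, h2, h3⟩
        simp only at h1 h2 h3
        refine hp ⟨pos_of_mul_pos_right h1 hr.1.le, ?_⟩
        by_contra hc
        push Not at hc
        nlinarith [hr.1]
    · exact (hf.indicator measurableSet_T0).comp (by fun_prop)
  · rw [indicator_of_notMem hr]
    rw [← lintegral_zero (μ := (volume : Measure ℝ))]
    congr 1; ext x
    apply indicator_of_notMem
    rintro ⟨h1, h2, h3⟩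
    simp only at h1 h2 h3
    exact hr ⟨by linarith, by linarith⟩

lemma vol_T0 : volume T0 = 1 / 2 := by
  have h := lint_T0 (fun _ => 1) measurable_const
  simp only [lintegral_const, MeasurableSet.univ, Measure.restrict_apply, univ_inter, one_mul,
    Real.volume_Ioo, sub_zero, ENNReal.ofReal_one, mul_one] at h
  rw [h, ← ofReal_integral_eq_lintegral_ofReal, ← integral_Ioc_eq_integral_Ioo,
    ← intervalIntegral.integral_of_le zero_le_one]
  · rw [integral_id, ENNReal.ofReal_div_of_pos (by norm_num)]; simp
  · exact (continuous_id.integrableOn_Icc (a := (0:ℝ)) (b := 1)).mono_set Ioo_subset_Icc_self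
  · exact (ae_restrict_iff' measurableSet_Ioo).2 (Filter.Eventually.of_forall fun x hx => hx.1.le)

instance : IsProbabilityMeasure μT := ⟨by
  rw [μT_eq]; simp [vol_T0]
  exact ENNReal.mul_inv_cancel (by norm_num) (by norm_num)⟩

instance (n : ℕ) : IsProbabilityMeasure (P n) := by unfold P; infer_instance

/-- affine map with matrix (a b; c d) and translation (e,f) -/
def aff (a b c d e f : ℝ) : ℝ × ℝ →ᵃ[ℝ] ℝ × ℝ where
  toFun z := (a * z.1 + b * z.2 + e, c * z.1 + d * z.2 + f)
  linear := Matrix.toLin (Module.Basis.finTwoProd ℝ) (Module.Basis.finTwoProd ℝ) !![a, b; c, d]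
  map_vadd' p v := by
    simp only [vadd_eq_add, Matrix.toLin_finTwoProd_apply, Prod.fst_add, Prod.snd_add, Prod.mk_add_mk, Prod.mk.injEq]
    constructor <;> ring

lemma aff_apply (a b c d e f : ℝ) (z : ℝ × ℝ) :
  aff a b c d e f z = (a * z.1 + b * z.2 + e, c * z.1 + d * z.2 + f) := rfl

lemma aff_cont (a b c d e f : ℝ) : Continuous (aff a b c d e f) := by
  show Continuous fun z : ℝ × ℝ => (a * z.1 + b * z.2 + e, c * z.1 + d * z.2 + f)
  fun_prop

lemma vol_aff_image (a b c d e f : ℝ) (s : Set (ℝ × ℝ)) :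
    volume (aff a b c d e f '' s) = ENNReal.ofReal |a * d - b * c| * volume s := by
  have h : aff a b c d e f '' s = (fun z => z + (e, f)) '' (Matrix.toLin (Module.Basis.finTwoProd ℝ) (Module.Basis.finTwoProd ℝ) !![a, b; c, d] '' s) := by
    rw [image_image]
    apply image_congr
    intro z _
    rw [aff_apply, Matrix.toLin_finTwoProd_apply]; rfl
  rw [h, image_add_right, measure_preimage_add_right, Measure.addHaar_image_linearMap,
    LinearMap.det_toLin, Matrix.det_fin_two_of]

lemma vol_aff_preimage (a b c d e f : ℝ) (hd : a * d - b * c ≠ 0) (s : Set (ℝ × ℝ)) :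
    volume (aff a b c d e f ⁻¹' s) = ENNReal.ofReal |(a * d - b * c)⁻¹| * volume s := by
  have h : aff a b c d e f ⁻¹' s = (Matrix.toLin (Module.Basis.finTwoProd ℝ) (Module.Basis.finTwoProd ℝ) !![a, b; c, d] ⁻¹' ((fun z => z + (e, f)) ⁻¹' s)) := by
    ext z
    simp only [mem_preimage]
    rw [aff_apply, Matrix.toLin_finTwoProd_apply]; rfl
  rw [h, Measure.addHaar_preimage_linearMap, measure_preimage_add_right,
    LinearMap.det_toLin, Matrix.det_fin_two_of]
  rwa [LinearMap.det_toLin, Matrix.det_fin_two_of]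

end RC
end A1

section A2
open Set
namespace RC

lemma convexHull_range_eq {ι : Type*} [Fintype ι] (v : ι → ℝ × ℝ) :
    convexHull ℝ (range v) = (Fintype.linearCombination ℝ v) '' stdSimplex ℝ ι := by
  classical
  rw [← convexHull_basis_eq_stdSimplex, LinearMap.image_convexHull, ← range_comp]
  congr 2
  ext i <;> simp [Fintype.linearCombination_apply]

lemma range_sumElim (n : ℕ) (ω : Fin n → ℝ × ℝ) :
    range (Sum.elim ω ![((1:ℝ), (0:ℝ)), (0, 1)]) = range ω ∪ {(1, 0), (0, 1)} := by
  rw [Sum.elim_range]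
  congr 1
  simp [Matrix.range_cons, Matrix.range_empty, pair_comm]

lemma isClosed_graph (n : ℕ) : IsClosed {q : (Fin n → ℝ × ℝ) × (ℝ × ℝ) | q.2 ∈ Tchain n q.1} := by
  have hcs : CompactSpace (stdSimplex ℝ (Fin n ⊕ Fin 2)) :=
    isCompact_iff_compactSpace.1 (isCompact_stdSimplex ℝ _)
  have hcl : IsClosed {t : ((Fin n → ℝ × ℝ) × (ℝ × ℝ)) × stdSimplex ℝ (Fin n ⊕ Fin 2) |
      ∑ i, (t.2.1 i) • (Sum.elim t.1.1 ![((1:ℝ), (0:ℝ)), (0, 1)] i) = t.1.2} := by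
    apply isClosed_eq
    · apply continuous_finsetSum
      rintro (i | i) _
      · simp only [Sum.elim_inl]
        exact ((continuous_apply (Sum.inl i)).comp
          (continuous_subtype_val.comp continuous_snd)).smul (by fun_prop)
      · simp only [Sum.elim_inr]
        exact ((continuous_apply (Sum.inr i)).comp
          (continuous_subtype_val.comp continuous_snd)).smul continuous_const
    · fun_prop
  have := isClosedMap_fst_of_compactSpace _ hcl
  convert this using 1
  ext ⟨ω, x⟩
  simp only [mem_ofPred_eq, mem_image, Prod.exists, exists_and_right, exists_eq_right]
  unfold Tchain
  rw [← range_sumElim, convexHull_range_eq]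
  simp [Fintype.linearCombination_apply]

lemma meas_vol (n : ℕ) : Measurable fun ω => volume (Tchain n ω) :=
  measurable_measure_prodMk_left (isClosed_graph n).measurableSet

lemma lint_pi_succ {k : ℕ} (ν : Measure (ℝ × ℝ)) [SigmaFinite ν] (i : Fin (k + 1))
    (F : (Fin (k + 1) → ℝ × ℝ) → ENNReal) (hF : Measurable F) :
    ∫⁻ ω, F ω ∂(Measure.pi fun _ => ν) =
      ∫⁻ z, ∫⁻ ω, F (i.insertNth z ω) ∂(Measure.pi fun _ : Fin k => ν) ∂ν := by
  have h := (measurePreserving_piFinSuccAbove (fun _ : Fin (k + 1) => ν) i).symm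
  rw [← h.lintegral_comp hF, lintegral_prod]
  · rfl
  · exact (hF.comp (MeasurableEquiv.measurable _)).aemeasurable

lemma range_insertNth {k : ℕ} (i : Fin (k + 1)) (z : ℝ × ℝ) (ω : Fin k → ℝ × ℝ) :
    range (i.insertNth z ω : Fin (k + 1) → ℝ × ℝ) = insert z (range ω) := by
  ext x
  simp only [mem_range, mem_insert_iff, Fin.exists_iff_succAbove i, Fin.insertNth_apply_same,
    Fin.insertNth_apply_succAbove, eq_comm]

lemma measurable_insertNth {k : ℕ} (i : Fin (k + 1)) :
    Measurable fun t : (ℝ × ℝ) × (Fin k → ℝ × ℝ) => (i.insertNth t.1 t.2 : Fin (k + 1) → ℝ × ℝ) :=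
  (MeasurableEquiv.piFinSuccAbove (fun _ => ℝ × ℝ) i).symm.measurable

lemma pascal (k : ℕ) (b : ENNReal) (I : ℕ → ENNReal) :
    ∑ m ∈ Finset.range (k + 2), ((k + 1).choose m : ENNReal) * b ^ (k + 1 - m) * I m =
    ∑ m ∈ Finset.range (k + 1), (k.choose m : ENNReal) * b ^ (k - m) * I (m + 1) +
    b * ∑ m ∈ Finset.range (k + 1), (k.choose m : ENNReal) * b ^ (k - m) * I m := by
  have h1 : b * ∑ m ∈ Finset.range (k + 1), (k.choose m : ENNReal) * b ^ (k - m) * I m =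
      ∑ m ∈ Finset.range (k + 2), (k.choose m : ENNReal) * b ^ (k + 1 - m) * I m := by
    rw [Finset.sum_range_succ _ (k + 1), Nat.choose_succ_self]
    simp only [Nat.cast_zero, zero_mul, add_zero]
    rw [Finset.mul_sum]
    apply Finset.sum_congr rfl
    intro m hm
    rw [show k + 1 - m = (k - m) + 1 by have := Finset.mem_range.1 hm; omega, pow_succ]
    ring
  rw [h1, Finset.sum_range_succ' _ (k + 1), Finset.sum_range_succ' _ (k + 1), ← add_assoc,
    ← Finset.sum_add_distrib]
  congr 1
  · apply Finset.sum_congr rfl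
    intro m _
    rw [Nat.choose_succ_succ, Nat.add_sub_add_right]
    push_cast
    ring
  · simp

lemma pi_binom (α : Measure (ℝ × ℝ)) [IsFiniteMeasure α] (b : NNReal) (c : ℝ × ℝ) (k : ℕ) :
    ∀ g : Set (ℝ × ℝ) → ENNReal, (∀ m, Measurable fun ω : Fin m → ℝ × ℝ => g (range ω)) →
      (∀ s, g (insert c s) = g s) →
      ∫⁻ ω, g (range ω) ∂(Measure.pi fun _ : Fin k => α + b • Measure.dirac c) =
      ∑ m ∈ Finset.range (k + 1), (k.choose m : ENNReal) * (b : ENNReal) ^ (k - m) *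
        ∫⁻ ω, g (range ω) ∂(Measure.pi fun _ : Fin m => α) := by
  induction k with
  | zero => 
    intro g hg hc
    simp only [zero_add, Finset.sum_range_one, Nat.choose_self, Nat.cast_one, Nat.sub_self, pow_zero, one_mul]
    rw [Measure.pi_of_empty, Measure.pi_of_empty]
  | succ k ih =>
    intro g hg hc
    have hjoint : ∀ m : ℕ, Measurable fun t : (ℝ × ℝ) × (Fin m → ℝ × ℝ) => g (insert t.1 (range t.2)) := by
      intro m
      have := (hg (m + 1)).comp (measurable_insertNth (0 : Fin (m + 1)))
      simpa only [Function.comp_def, range_insertNth] using this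
    rw [lint_pi_succ _ 0 _ (hg _)]
    simp only [range_insertNth]
    have hL : ∀ z, ∫⁻ ω, g (insert z (range ω)) ∂(Measure.pi fun _ : Fin k => α + b • Measure.dirac c) =
        ∑ m ∈ Finset.range (k + 1), (k.choose m : ENNReal) * (b : ENNReal) ^ (k - m) *
        ∫⁻ ω, g (insert z (range ω)) ∂(Measure.pi fun _ : Fin m => α) := by
      intro z
      refine ih (fun s => g (insert z s)) (fun m => (hjoint m).comp measurable_prodMk_left) ?_
      intro s
      show g (insert z (insert c s)) = _
      rw [insert_comm, hc]
    simp only [hL]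
    have hmz : ∀ m : ℕ, Measurable fun z => ∫⁻ ω, g (insert z (range ω)) ∂(Measure.pi fun _ : Fin m => α) :=
      fun m => (hjoint m).lintegral_prod_right'
    have hmz' : Measurable fun z => ∑ m ∈ Finset.range (k + 1), (k.choose m : ENNReal) * (b : ENNReal) ^ (k - m) *
        ∫⁻ ω, g (insert z (range ω)) ∂(Measure.pi fun _ : Fin m => α) :=
      Finset.measurable_sum _ fun m _ => (hmz m).const_mul _
    rw [lintegral_add_measure, lintegral_finsetSum _ (fun m _ => (hmz m).const_mul _)]
    simp only [lintegral_const_mul _ (hmz _)]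
    rw [lintegral_smul_measure, lintegral_dirac' _ hmz', pascal]
    congr 1
    · apply Finset.sum_congr rfl
      intro m _
      rw [lint_pi_succ _ 0 _ (hg _)]
      simp only [range_insertNth]
    · simp only [hc]; rfl

end RC
end A2

section A3
open Set
namespace RC

def cut (z : ℝ × ℝ) : ℝ × ℝ := if z.1 + z.2 ≤ 1 then z else (1, 0)

lemma measurable_cut : Measurable cut := by
  unfold cut
  exact Measurable.ite (measurableSet_le (measurable_fst.add measurable_snd) measurable_const)
    measurable_id measurable_const

lemma vol_T : volume T = 1 / 2 := by rw [← measure_congr T0_ae, vol_T0]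

def C1 (κ : ℝ) : Set (ℝ × ℝ) := {z | 0 ≤ z.1 ∧ 1 ≤ z.1 + z.2 ∧ κ * z.1 + z.2 ≤ κ}

/-- auxiliary map, sends `C1 κ` to `T`. -/
def up (κ : ℝ) := aff 1 0 (1 / (κ - 1)) (1 / (κ - 1)) 0 (-1 / (κ - 1))

lemma up_apply {κ : ℝ} (z : ℝ × ℝ) : up κ z = (z.1, (z.1 + z.2 - 1) / (κ - 1)) := by
  unfold up
  rw [aff_apply]; ext
  · simp
  · simp; ring

lemma vol_up {κ : ℝ} (hκ : 1 < κ) (s : Set (ℝ × ℝ)) :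
    volume (up κ ⁻¹' s) = ENNReal.ofReal (κ - 1) * volume s := by
  have hk : 0 < κ - 1 := by linarith
  unfold up
  rw [vol_aff_preimage]
  · simp only [one_div, one_mul, zero_mul, sub_zero, inv_inv, abs_of_pos hk]
  · simp [hk.ne']

lemma C1_eq {κ : ℝ} (hκ : 1 < κ) : C1 κ = up κ ⁻¹' T := by
  have hk : 0 < κ - 1 := by linarith
  ext z
  rw [T_eq, mem_preimage, up_apply]
  simp only [C1, mem_ofPred_eq]
  rw [le_div_iff₀ hk, zero_mul]
  refine and_congr Iff.rfl (and_congr (by constructor <;> intro h <;> linarith) ?_)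
  rw [← le_sub_iff_add_le' (a := z.1) (c := 1), div_le_iff₀ hk]
  constructor <;> intro h <;> nlinarith

lemma isClosed_Tchain (n : ℕ) (ω : Fin n → ℝ × ℝ) : IsClosed (Tchain n ω) :=
  (isClosed_graph n).preimage (Continuous.prodMk_right ω)

lemma convex_union {κ : ℝ} (hκ : 1 < κ) (C2 : Set (ℝ × ℝ)) (hC2 : Convex ℝ C2)
    (hT : C2 ⊆ T) (h1 : ((1:ℝ), (0:ℝ)) ∈ C2) (h2 : ((0:ℝ), (1:ℝ)) ∈ C2) :
    Convex ℝ (C1 κ ∪ C2) := by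
  have hC1 : Convex ℝ (C1 κ) := by
    rw [C1_eq hκ]
    exact (convex_convexHull ℝ _).affine_preimage _
  have key : ∀ x ∈ C1 κ, ∀ y ∈ C2, segment ℝ x y ⊆ C1 κ ∪ C2 := by
    rintro x hx y hy
    obtain ⟨x1, x2, x3⟩ := id hx
    have hyT := hT hy
    rw [T_eq] at hyT
    obtain ⟨y1, y2, y3⟩ := hyT
    obtain ⟨t, ht0, ht1, ht⟩ : ∃ t : ℝ, 0 ≤ t ∧ t ≤ 1 ∧
        (1 - t) * (x.1 + x.2) + t * (y.1 + y.2) = 1 := by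
      rcases eq_or_lt_of_le x2 with h | h
      · exact ⟨0, le_rfl, zero_le_one, by linarith⟩
      · have hpos : 0 < (x.1 + x.2) - (y.1 + y.2) := by linarith
        refine ⟨(x.1 + x.2 - 1) / ((x.1 + x.2) - (y.1 + y.2)), by apply div_nonneg <;> linarith,
          (div_le_one hpos).2 (by linarith), ?_⟩
        field_simp
        ring
    set z : ℝ × ℝ := AffineMap.lineMap x y t with hz
    have hz1 : z.1 = (1 - t) * x.1 + t * y.1 := by simp [hz, AffineMap.lineMap_apply]; ring
    have hz2 : z.2 = (1 - t) * x.2 + t * y.2 := by simp [hz, AffineMap.lineMap_apply]; ring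
    have hs : z.1 + z.2 = 1 := by rw [hz1, hz2]; linarith
    have h0 : 0 ≤ z.1 := by
      rw [hz1]
      have : 0 ≤ 1 - t := by linarith
      positivity
    have hy4 : κ * y.1 + y.2 ≤ κ := by nlinarith
    have h3 : κ * z.1 + z.2 ≤ κ := by
      rw [hz1, hz2]
      nlinarith [mul_le_mul_of_nonneg_left x3 (by linarith : 0 ≤ 1 - t),
        mul_le_mul_of_nonneg_left hy4 ht0]
    have hzC1 : z ∈ C1 κ := ⟨h0, hs.ge, h3⟩
    have h1' : z.1 ≤ 1 := by nlinarith
    have hzC2 : z ∈ C2 := by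
      have := hC2 h1 h2 h0 (by linarith : 0 ≤ z.2) hs
      have e : z.1 • ((1:ℝ), (0:ℝ)) + z.2 • ((0:ℝ), (1:ℝ)) = z := by ext <;> simp
      rwa [e] at this
    rw [← insert_endpoints_openSegment]
    rintro w (rfl | rfl | hw)
    · exact Or.inl hx
    · exact Or.inr hy
    · rcases openSegment_subset_union x y ⟨t, hz.symm⟩ hw with rfl | hw | hw
      · exact Or.inl hzC1
      · exact Or.inl (hC1.openSegment_subset hx hzC1 hw)
      · exact Or.inr (hC2.openSegment_subset hzC2 hy hw)
  rw [convex_iff_segment_subset]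
  rintro x (hx | hx) y (hy | hy)
  · exact (hC1.segment_subset hx hy).trans subset_union_left
  · exact key x hx y hy
  · rw [segment_symm]; exact key y hy x hx
  · exact (hC2.segment_subset hx hy).trans subset_union_right

lemma geom {κ : ℝ} (hκ : 1 < κ) (n : ℕ) (ω : Fin n → ℝ × ℝ)
    (h : ∀ i, 0 ≤ (ω i).1 ∧ 0 ≤ (ω i).2 ∧ κ * (ω i).1 + (ω i).2 ≤ κ) :
    volume (convexHull ℝ (insert ((0:ℝ), κ) (range ω ∪ {(1, 0), (0, 1)}))) =
      ENNReal.ofReal (κ - 1) * (1 / 2) + volume (Tchain n (cut ∘ ω)) := by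
  have hk : 0 < κ - 1 := by linarith
  have hTc : Convex ℝ T := convex_convexHull ℝ _
  have hC2T : Tchain n (cut ∘ ω) ⊆ T := by
    apply convexHull_min _ hTc
    rw [T_eq]
    rintro z (⟨i, rfl⟩ | rfl | rfl)
    · simp only [Function.comp, cut]
      split_ifs with hi
      · exact ⟨(h i).1, (h i).2.1, hi⟩
      · simp
    · simp
    · simp
  have m1 : ((1:ℝ), (0:ℝ)) ∈ Tchain n (cut ∘ ω) := subset_convexHull ℝ _ (by simp)
  have m2 : ((0:ℝ), (1:ℝ)) ∈ Tchain n (cut ∘ ω) := subset_convexHull ℝ _ (by simp)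
  have hset : convexHull ℝ (insert ((0:ℝ), κ) (range ω ∪ {(1, 0), (0, 1)})) =
      C1 κ ∪ Tchain n (cut ∘ ω) := by
    apply Subset.antisymm
    · apply convexHull_min _ (convex_union hκ _ (convex_convexHull ℝ _) hC2T m1 m2)
      rintro z (rfl | ⟨i, rfl⟩ | rfl | rfl)
      · left; simp [C1]; exact hκ.le
      · by_cases hi : (ω i).1 + (ω i).2 ≤ 1
        · right
          apply subset_convexHull
          left
          exact ⟨i, by simp [cut, hi]⟩
        · left
          exact ⟨(h i).1, by linarith, (h i).2.2⟩
      · exact Or.inr m1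
      · exact Or.inr m2
    · apply union_subset
      · rintro ⟨u, v⟩ ⟨h1, h2, h3⟩
        simp only at h1 h2 h3
        have hc := convex_convexHull ℝ (insert ((0:ℝ), κ) (range ω ∪ {(1, 0), (0, 1)}))
        have hm : ∀ z ∈ insert ((0:ℝ), κ) (range ω ∪ {(1, 0), (0, 1)}),
          z ∈ convexHull ℝ (insert ((0:ℝ), κ) (range ω ∪ {(1, 0), (0, 1)})) :=
          fun z hz => subset_convexHull ℝ _ hz
        have hle : (u + v - 1) / (κ - 1) ≤ 1 - u := by
          rw [div_le_iff₀ hk]; nlinarith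
        have hge : 0 ≤ (u + v - 1) / (κ - 1) := by apply div_nonneg <;> linarith
        have := hc.sum_mem (t := (Finset.univ : Finset (Fin 3)))
          (w := ![(u + v - 1) / (κ - 1), u, 1 - u - (u + v - 1) / (κ - 1)])
          (z := ![(0, κ), (1, 0), (0, 1)]) ?_ ?_ ?_
        · have e : (u + v - 1) / (κ - 1) * κ + (1 - u - (u + v - 1) / (κ - 1)) = v := by
            field_simp; ring
          simp only [Fin.sum_univ_three, Matrix.cons_val_zero, Matrix.cons_val_one, Matrix.cons_val,
            Prod.smul_mk, smul_eq_mul, mul_zero, mul_one, Prod.mk_add_mk, zero_add, add_zero, e] at this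
          exact this
        · intro i _; fin_cases i <;> simp <;> linarith
        · simp [Fin.sum_univ_three]; ring
        · intro i _; fin_cases i <;> apply hm <;> simp
      · apply convexHull_min _ (convex_convexHull ℝ _)
        rintro z (⟨i, rfl⟩ | rfl | rfl)
        · simp only [Function.comp, cut]
          split_ifs with hi
          · exact subset_convexHull ℝ _ (by simp)
          · exact subset_convexHull ℝ _ (by simp)
        · exact subset_convexHull ℝ _ (by simp)
        · exact subset_convexHull ℝ _ (by simp)
  rw [hset, measure_union₀ (isClosed_Tchain _ _).measurableSet.nullMeasurableSet, C1_eq hκ,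
    vol_up hκ, vol_T]
  refine measure_mono_null ?_ (line_null1 (fun y => 1 - y) (by fun_prop))
  rintro z ⟨⟨-, h1, -⟩, h2⟩
  have := hC2T h2
  rw [T_eq] at this
  have := this.2.2
  show z.1 = 1 - z.2
  linarith

def Bm (p r : ℝ) := aff (1 / (1 - p)) (p / (1 - p)) 0 (1 / (1 - r)) (-p / (1 - p)) 0

lemma Bm_apply (p r : ℝ) (z : ℝ × ℝ) : Bm p r z = ((z.1 - p * (1 - z.2)) / (1 - p), z.2 / (1 - r)) := by
  unfold Bm
  rw [aff_apply]; ext <;> simp <;> ring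

lemma vol_split {p r : ℝ} (hp : p ∈ Ioo (0:ℝ) 1) (hr : r ∈ Ioo (0:ℝ) 1) (n : ℕ) (ω : Fin n → ℝ × ℝ)
    (h : ∀ i, ω i ∈ T0 ∧ p * (1 - (ω i).2) < (ω i).1) :
    volume (convexHull ℝ (insert (r * p, 1 - r) (range ω) ∪ {((1:ℝ), (0:ℝ)), (0, 1)})) =
      ENNReal.ofReal (r * (1 - p)) * (1 / 2) + ENNReal.ofReal ((1 - r) * (1 - p)) *
      volume (Tchain n (cut ∘ Bm p r ∘ ω)) := by
  have hp' : 0 < 1 - p := by linarith [hp.2]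
  have hr' : 0 < 1 - r := by linarith [hr.2]
  have hκ : 1 < 1 / (1 - r) := by rw [lt_div_iff₀ hr']; linarith [hr.1]
  have him : Bm p r '' (convexHull ℝ (insert (r * p, 1 - r) (range ω) ∪ {((1:ℝ), (0:ℝ)), (0, 1)})) =
      convexHull ℝ (insert ((0:ℝ), 1 / (1 - r)) (range (Bm p r ∘ ω) ∪ {(1, 0), (0, 1)})) := by
    rw [AffineMap.image_convexHull, image_union, image_insert_eq, image_pair, ← range_comp]
    have e1 : Bm p r (r * p, 1 - r) = (0, 1) := by
      rw [Bm_apply]; ext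
      · simp; left; ring
      · simp [hr'.ne']
    have e2 : Bm p r (1, 0) = (1, 0) := by
      rw [Bm_apply]; ext <;> simp [hp'.ne']
    have e3 : Bm p r (0, 1) = (0, 1 / (1 - r)) := by
      rw [Bm_apply]; ext <;> simp
    rw [e1, e2, e3]
    congr 1
    ext x
    simp only [mem_union, mem_insert_iff, mem_singleton_iff]
    tauto
  have hg := geom hκ n (Bm p r ∘ ω) ?_
  · rw [← him, Bm, vol_aff_image] at hg
    have hd : |1 / (1 - p) * (1 / (1 - r)) - p / (1 - p) * 0| = 1 / ((1 - r) * (1 - p)) := by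
      rw [mul_zero, sub_zero, abs_of_pos (by positivity)]; field_simp
    rw [hd] at hg
    have hq : 0 < (1 - r) * (1 - p) := by positivity
    have := congrArg (fun x => ENNReal.ofReal ((1 - r) * (1 - p)) * x) hg
    rw [← mul_assoc, ← ENNReal.ofReal_mul hq.le, mul_one_div_cancel hq.ne', ENNReal.ofReal_one,
      one_mul, mul_add, ← mul_assoc, ← ENNReal.ofReal_mul hq.le] at this
    rw [this]
    congr 3
    field_simp
    ring
  · intro i
    obtain ⟨⟨h1, h2, h3⟩, h4⟩ := h i
    simp only [Function.comp, Bm_apply]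
    refine ⟨by apply div_nonneg <;> linarith, by positivity, ?_⟩
    rw [one_div_mul_eq_div, ← add_div]
    apply div_le_div_of_nonneg_right _ hr'.le
    have : ((ω i).1 - p * (1 - (ω i).2)) / (1 - p) ≤ 1 - (ω i).2 := by
      rw [div_le_iff₀ hp']; nlinarith
    linarith

end RC
end A3

section A4
open Set
namespace RC

lemma vol_Bm {p r : ℝ} (hp : p ∈ Ioo (0:ℝ) 1) (hr : r ∈ Ioo (0:ℝ) 1) (s : Set (ℝ × ℝ)) :
    volume (Bm p r ⁻¹' s) = ENNReal.ofReal ((1 - r) * (1 - p)) * volume s := by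
  have hp' : 0 < 1 - p := by linarith [hp.2]
  have hr' : 0 < 1 - r := by linarith [hr.2]
  unfold Bm
  have e : 1 / (1 - p) * (1 / (1 - r)) - p / (1 - p) * 0 = ((1 - r) * (1 - p))⁻¹ := by
    field_simp; ring
  rw [vol_aff_preimage _ _ _ _ _ _ (by rw [e]; positivity), e, inv_inv, abs_of_pos (by positivity)]

def half (p : ℝ) : Set (ℝ × ℝ) := {z | p * (1 - z.2) < z.1}

lemma measurableSet_half (p : ℝ) : MeasurableSet (half p) :=
  measurableSet_lt (by fun_prop) measurable_fst

lemma part1 {p r : ℝ} (hp : p ∈ Ioo (0:ℝ) 1) (hr : r ∈ Ioo (0:ℝ) 1) (S : Set (ℝ × ℝ)) :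
    {z | z ∈ T0 ∧ z ∈ half p ∧ (Bm p r z).1 + (Bm p r z).2 ≤ 1 ∧ Bm p r z ∈ S} =
      Bm p r ⁻¹' (S ∩ {z : ℝ × ℝ | 0 < z.1 ∧ 0 < z.2 ∧ z.1 + z.2 ≤ 1}) := by
  have hp' : 0 < 1 - p := by linarith [hp.2]
  have hr' : 0 < 1 - r := by linarith [hr.2]
  ext ⟨x, y⟩
  have hu : (Bm p r (x, y)).1 = (x - p * (1 - y)) / (1 - p) := by rw [Bm_apply]
  have hv : (Bm p r (x, y)).2 = y / (1 - r) := by rw [Bm_apply]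
  simp only [T0, half, mem_ofPred_eq, mem_preimage, mem_inter_iff]
  constructor
  · rintro ⟨⟨h1, h2, h3⟩, h4, h5, h6⟩
    refine ⟨h6, ?_, ?_, h5⟩
    · rw [hu]; apply div_pos <;> linarith
    · rw [hv]; positivity
  · rintro ⟨h6, h1, h2, h3⟩
    generalize (Bm p r (x, y)).1 = u at *
    generalize (Bm p r (x, y)).2 = v at *
    rw [eq_div_iff hp'.ne'] at hu
    rw [eq_div_iff hr'.ne'] at hv
    have hy : 0 < y := by rw [← hv]; positivity
    have hyv : y < v := by nlinarith [hr.1]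
    have h4 : p * (1 - y) < x := by nlinarith
    have h7 : 0 < p * (1 - y) := mul_pos hp.1 (by linarith)
    exact ⟨⟨by linarith, hy, by nlinarith⟩, h4, h3, h6⟩

lemma part2 {p r : ℝ} (hp : p ∈ Ioo (0:ℝ) 1) (hr : r ∈ Ioo (0:ℝ) 1) :
    {z | z ∈ T0 ∧ z ∈ half p ∧ ¬ (Bm p r z).1 + (Bm p r z).2 ≤ 1} =
      Bm p r ⁻¹' (up (1 / (1 - r)) ⁻¹' T0) := by
  have hp' : 0 < 1 - p := by linarith [hp.2]
  have hr' : 0 < 1 - r := by linarith [hr.2]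
  ext ⟨x, y⟩
  have hu : (Bm p r (x, y)).1 = (x - p * (1 - y)) / (1 - p) := by rw [Bm_apply]
  have hv : (Bm p r (x, y)).2 = y / (1 - r) := by rw [Bm_apply]
  simp only [T0, half, mem_ofPred_eq, mem_preimage, mem_inter_iff, up_apply]
  generalize (Bm p r (x, y)).1 = u at *
  generalize (Bm p r (x, y)).2 = v at *
  rw [eq_div_iff hp'.ne'] at hu
  rw [eq_div_iff hr'.ne'] at hv
  have e : (u + v - 1) / (1 / (1 - r) - 1) = (u + v - 1) * (1 - r) / r := by
    have : 1 / (1 - r) - 1 = r / (1 - r) := by field_simp; ring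
    rw [this, div_div_eq_mul_div]
  rw [e]
  constructor
  · rintro ⟨⟨h1, h2, h3⟩, h4, h5⟩
    have hu0 : 0 < u := by
      by_contra hc; push Not at hc; nlinarith
    refine ⟨hu0, by apply div_pos _ hr.1; apply mul_pos _ hr'; linarith, ?_⟩
    rw [← lt_sub_iff_add_lt', div_lt_iff₀ hr.1]
    have : u + y < 1 := by
      by_contra hc; push Not at hc; nlinarith
    nlinarith
  · rintro ⟨h1, h2, h3⟩
    have h5 : 1 < u + v := by
      by_contra hc
      push Not at hc
      have : (u + v - 1) * (1 - r) / r ≤ 0 :=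
        div_nonpos_of_nonpos_of_nonneg (mul_nonpos_of_nonpos_of_nonneg (by linarith) hr'.le) hr.1.le
      linarith
    rw [← lt_sub_iff_add_lt', div_lt_iff₀ hr.1] at h3
    have h6 : u + y < 1 := by nlinarith
    have hu1 : u < 1 := by
      by_contra hc; push Not at hc
      nlinarith [mul_pos (by linarith : 0 < u + v - 1) hr', mul_nonneg (by linarith : 0 ≤ u - 1) hr.1.le]
    have hy : 0 < y := by rw [← hv]; apply mul_pos _ hr'; linarith
    have h4 : p * (1 - y) < x := by nlinarith
    have h7 : 0 < p * (1 - y) := mul_pos hp.1 (by linarith)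
    exact ⟨⟨by linarith, hy, by nlinarith⟩, h4, by linarith⟩

lemma T0'_ae : {z : ℝ × ℝ | 0 < z.1 ∧ 0 < z.2 ∧ z.1 + z.2 ≤ 1} =ᵐ[volume] T0 := by
  refine ae_eq_set.2 ⟨?_, ?_⟩
  · refine measure_mono_null ?_ (line_null1 (fun y => 1 - y) (by fun_prop))
    rintro z ⟨⟨h1, h2, h3⟩, h⟩
    show z.1 = 1 - z.2
    by_contra hc
    exact h ⟨h1, h2, lt_of_le_of_ne h3 (fun h => hc (by linarith))⟩
  · rw [sdiff_eq_empty.2]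
    · simp
    · rintro z ⟨h1, h2, h3⟩; exact ⟨h1, h2, h3.le⟩

lemma map_measure {p r : ℝ} (hp : p ∈ Ioo (0:ℝ) 1) (hr : r ∈ Ioo (0:ℝ) 1) :
    Measure.map (fun z => cut (Bm p r z)) (μT.restrict (half p)) =
      (Real.toNNReal ((1 - r) * (1 - p))) • μT +
      (Real.toNNReal (r * (1 - p))) • Measure.dirac ((1:ℝ), (0:ℝ)) := by
  have hp' : 0 < 1 - p := by linarith [hp.2]
  have hr' : 0 < 1 - r := by linarith [hr.2]
  have hκ : 1 < 1 / (1 - r) := by rw [lt_div_iff₀ hr']; linarith [hr.1]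
  have hB : Measurable (Bm p r) := (aff_cont _ _ _ _ _ _).measurable
  have hm : Measurable (fun z => cut (Bm p r z)) := measurable_cut.comp hB
  ext S hS
  rw [Measure.map_apply hm hS, Measure.restrict_apply (hm hS), μT_eq, Measure.add_apply,
    Measure.smul_apply, Measure.restrict_apply ((hm hS).inter (measurableSet_half p)),
    Measure.smul_apply, Measure.smul_apply, Measure.smul_apply, Measure.restrict_apply hS,
    Measure.dirac_apply' _ hS]
  have hs : MeasurableSet {z | (Bm p r z).1 + (Bm p r z).2 ≤ 1} :=
    measurableSet_le (by fun_prop) measurable_const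
  rw [← measure_inter_add_sdiff _ hs]
  have e1 : ((fun z => cut (Bm p r z)) ⁻¹' S ∩ half p ∩ T0) ∩ {z | (Bm p r z).1 + (Bm p r z).2 ≤ 1} =
    {z | z ∈ T0 ∧ z ∈ half p ∧ (Bm p r z).1 + (Bm p r z).2 ≤ 1 ∧ Bm p r z ∈ S} := by
    ext z
    simp only [mem_inter_iff, mem_preimage, mem_ofPred_eq]
    constructor
    · rintro ⟨⟨⟨h1, h2⟩, h3⟩, h4⟩
      rw [cut, if_pos h4] at h1
      exact ⟨h3, h2, h4, h1⟩
    · rintro ⟨h3, h2, h4, h1⟩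
      refine ⟨⟨⟨?_, h2⟩, h3⟩, h4⟩
      rwa [cut, if_pos h4]
  have v1 : volume (Bm p r ⁻¹' (S ∩ {z : ℝ × ℝ | 0 < z.1 ∧ 0 < z.2 ∧ z.1 + z.2 ≤ 1})) =
      ENNReal.ofReal ((1 - r) * (1 - p)) * volume (S ∩ T0) := by
    rw [vol_Bm hp hr]
    congr 1
    exact measure_congr ((Filter.EventuallyEq.refl _ _).inter T0'_ae)
  have v2 : volume (Bm p r ⁻¹' (up (1 / (1 - r)) ⁻¹' T0)) = ENNReal.ofReal (r * (1 - p)) * (1 / 2) := by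
    rw [vol_Bm hp hr, vol_up hκ, vol_T0, ← mul_assoc, ← ENNReal.ofReal_mul (by positivity)]
    congr 2
    field_simp; ring
  rw [e1, part1 hp hr, v1]
  have h2 : (2 : ENNReal) * (1 / 2) = 1 := by
    rw [one_div]; exact ENNReal.mul_inv_cancel (by norm_num) (by norm_num)
  by_cases hc : ((1:ℝ), (0:ℝ)) ∈ S
  · have e2 : ((fun z => cut (Bm p r z)) ⁻¹' S ∩ half p ∩ T0) \ {z | (Bm p r z).1 + (Bm p r z).2 ≤ 1} =
      {z | z ∈ T0 ∧ z ∈ half p ∧ ¬ (Bm p r z).1 + (Bm p r z).2 ≤ 1} := by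
      ext z
      simp only [mem_sdiff, mem_inter_iff, mem_preimage, mem_ofPred_eq]
      constructor
      · rintro ⟨⟨⟨h1, h2⟩, h3⟩, h4⟩
        exact ⟨h3, h2, h4⟩
      · rintro ⟨h3, h2, h4⟩
        refine ⟨⟨⟨?_, h2⟩, h3⟩, h4⟩
        rwa [cut, if_neg h4]
    rw [e2, part2 hp hr, v2, indicator_of_mem hc, smul_eq_mul, mul_add]
    simp only [ENNReal.smul_def, smul_eq_mul, Pi.one_apply, mul_one]
    congr 1
    · rw [mul_left_comm]; rfl
    · rw [mul_left_comm, h2, mul_one]; rfl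
  · have e2 : ((fun z => cut (Bm p r z)) ⁻¹' S ∩ half p ∩ T0) \ {z | (Bm p r z).1 + (Bm p r z).2 ≤ 1} = ∅ := by
      ext z
      simp only [mem_sdiff, mem_inter_iff, mem_preimage, mem_ofPred_eq, mem_empty_iff_false, iff_false]
      rintro ⟨⟨⟨h1, h2⟩, h3⟩, h4⟩
      rw [cut, if_neg h4] at h1
      exact hc h1
    rw [e2, indicator_of_notMem hc, measure_empty, add_zero, smul_zero, add_zero]
    simp only [ENNReal.smul_def, smul_eq_mul]
    rw [mul_left_comm]; rfl

end RC
end A4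

section A5
open Set
namespace RC

def area (s : Set (ℝ × ℝ)) : ENNReal := volume (convexHull ℝ (s ∪ {((1:ℝ), (0:ℝ)), (0, 1)}))

lemma area_range (n : ℕ) (ω : Fin n → ℝ × ℝ) : area (range ω) = volume (Tchain n ω) := rfl

lemma meas_area (n : ℕ) : Measurable fun ω : Fin n → ℝ × ℝ => area (range ω) := meas_vol n

lemma area_insert (s : Set (ℝ × ℝ)) : area (insert ((1:ℝ), (0:ℝ)) s) = area s := by
  unfold area
  congr 2
  ext x
  simp only [mem_union, mem_insert_iff, mem_singleton_iff]
  tauto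

lemma pi_smul_eq (a : NNReal) (m : ℕ) :
    (Measure.pi fun _ : Fin m => a • μT) = (a : ENNReal) ^ m • P m := by
  refine (Measure.pi_eq fun s hs => ?_)
  unfold P
  rw [Measure.smul_apply, Measure.pi_pi, smul_eq_mul]
  simp only [Measure.smul_apply, ENNReal.smul_def, smul_eq_mul]
  rw [Finset.prod_mul_distrib]
  simp

lemma ae_μT : ∀ᵐ z ∂μT, z ∈ T0 := by
  rw [μT_eq]
  exact Measure.ae_smul_measure (ae_restrict_mem measurableSet_T0) _

lemma inner_eq {p r : ℝ} (hp : p ∈ Ioo (0:ℝ) 1) (hr : r ∈ Ioo (0:ℝ) 1) (k : ℕ)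
    (F : ENNReal → ENNReal) (hF : Measurable F) :
    ∫⁻ ω, (univ.pi fun _ : Fin k => half p).indicator
      (fun ω => F (area (insert (r * p, 1 - r) (range ω)))) ω ∂P k =
    ∑ m ∈ Finset.range (k + 1), (k.choose m : ENNReal) * ENNReal.ofReal (r * (1 - p)) ^ (k - m) *
      (ENNReal.ofReal ((1 - r) * (1 - p)) ^ m *
        ∫⁻ ω, F (ENNReal.ofReal (r * (1 - p)) * (1 / 2) + ENNReal.ofReal ((1 - r) * (1 - p)) *
          volume (Tchain m ω)) ∂P m) := by
  have hB : Measurable (Bm p r) := (aff_cont _ _ _ _ _ _).measurable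
  have hm : Measurable (fun z => cut (Bm p r z)) := measurable_cut.comp hB
  rw [lintegral_indicator (MeasurableSet.univ_pi fun _ => measurableSet_half p)]
  unfold P
  rw [Measure.restrict_pi_pi]
  set g : Set (ℝ × ℝ) → ENNReal := fun s => F (ENNReal.ofReal (r * (1 - p)) * (1 / 2) +
    ENNReal.ofReal ((1 - r) * (1 - p)) * area s) with hg
  have hgm : ∀ m, Measurable fun ω : Fin m → ℝ × ℝ => g (range ω) := fun m =>
    hF.comp (((meas_area m).const_mul _).const_add _)
  have hae : ∀ᵐ z ∂(μT.restrict (half p)), z ∈ T0 ∧ z ∈ half p :=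
    (ae_restrict_of_ae ae_μT).and (ae_restrict_mem (measurableSet_half p))
  have h1 : ∫⁻ ω, F (area (insert (r * p, 1 - r) (range ω)))
      ∂(Measure.pi fun _ : Fin k => μT.restrict (half p)) =
      ∫⁻ ω, g (range fun i => cut (Bm p r (ω i)))
        ∂(Measure.pi fun _ : Fin k => μT.restrict (half p)) := by
    apply lintegral_congr_ae
    have : ∀ᵐ ω ∂(Measure.pi fun _ : Fin k => μT.restrict (half p)), ∀ i, ω i ∈ T0 ∧ ω i ∈ half p :=
      ae_all_iff.2 fun i => (Measure.tendsto_eval_ae_ae (μ := fun _ : Fin k => μT.restrict (half p)) (i := i)).eventually hae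
    filter_upwards [this] with ω hω
    rw [hg]
    simp only
    congr 1
    exact vol_split hp hr k ω hω
  have hfin : IsFiniteMeasure (Measure.map (fun z => cut (Bm p r z)) (μT.restrict (half p))) := inferInstance
  rw [h1]
  have h2 := lintegral_map (μ := Measure.pi fun _ : Fin k => μT.restrict (half p)) (hgm k)
    (g := fun ω i => cut (Bm p r (ω i))) (measurable_pi_lambda _ fun i => hm.comp (measurable_pi_apply i))
  rw [← h2, Measure.pi_map_pi (fun _ => hm.aemeasurable)]
  rw [map_measure hp hr] 
  rw [pi_binom _ _ _ k g hgm]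
  · apply Finset.sum_congr rfl
    intro m _
    congr 1
    rw [pi_smul_eq, lintegral_smul_measure]
    rfl
  · intro s
    simp only [hg, area_insert]

def sl (z : ℝ × ℝ) : ℝ := z.1 / (1 - z.2)

lemma measurable_sl : Measurable sl := by unfold sl; fun_prop

def Dset {k : ℕ} (i : Fin (k + 1)) : Set (Fin (k + 1) → ℝ × ℝ) :=
  {ω | ∀ j : Fin k, ω (i.succAbove j) ∈ half (sl (ω i))}

lemma measurableSet_Dset {k : ℕ} (i : Fin (k + 1)) : MeasurableSet (Dset i) := by
  have : Dset i = ⋂ j : Fin k, {ω | ω (i.succAbove j) ∈ half (sl (ω i))} := by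
    ext; simp [Dset]
  rw [this]
  refine MeasurableSet.iInter fun j => ?_
  have h1 : Measurable fun ω : Fin (k + 1) → ℝ × ℝ => sl (ω i) := measurable_sl.comp (measurable_pi_apply i)
  exact measurableSet_lt (h1.mul (by fun_prop)) (by fun_prop)

lemma no_tie {k : ℕ} (i : Fin (k + 1)) (j : Fin k) :
    ∀ᵐ ω ∂P (k + 1), (ω (i.succAbove j)).1 ≠ sl (ω i) * (1 - (ω (i.succAbove j)).2) := by
  have h1 : Measurable fun ω : Fin (k + 1) → ℝ × ℝ => sl (ω i) := measurable_sl.comp (measurable_pi_apply i)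
  have hm : MeasurableSet {ω : Fin (k + 1) → ℝ × ℝ |
      (ω (i.succAbove j)).1 = sl (ω i) * (1 - (ω (i.succAbove j)).2)} :=
    measurableSet_eq_fun (by fun_prop) (h1.mul (by fun_prop))
  rw [ae_iff]
  simp only [ne_eq, not_not]
  rw [← lintegral_indicator_one hm]
  unfold P
  rw [lint_pi_succ _ i _ (measurable_one.indicator hm)]
  rw [← lintegral_zero (μ := μT)]
  congr 1; ext z
  rw [← lintegral_zero (μ := Measure.pi fun _ : Fin k => μT)]
  apply lintegral_congr_ae
  have hl : μT {w | w.1 = sl z * (1 - w.2)} = 0 := by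
    rw [μT_eq, Measure.smul_apply]
    have := line_null1 (fun y => sl z * (1 - y)) (by fun_prop)
    rw [measure_mono_null Subset.rfl (Measure.absolutelyContinuous_of_le Measure.restrict_le_self this)]
    simp
  have hl' : ∀ᵐ w ∂μT, ¬ (w.1 = sl z * (1 - w.2)) := by
    rw [ae_iff]; simpa using hl
  have : ∀ᵐ ω ∂(Measure.pi fun _ : Fin k => μT), ¬ ((ω j).1 = sl z * (1 - (ω j).2)) :=
    (Measure.tendsto_eval_ae_ae (μ := fun _ : Fin k => μT) (i := j)).eventually hl'
  filter_upwards [this] with ω hω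
  apply indicator_of_notMem
  simpa using hω

lemma decomp {k : ℕ} (f : (Fin (k + 1) → ℝ × ℝ) → ENNReal) :
    ∀ᵐ ω ∂P (k + 1), f ω = ∑ i, (Dset i).indicator f ω := by
  have h0 : ∀ᵐ ω ∂P (k + 1), ∀ i, ω i ∈ T0 :=
    ae_all_iff.2 fun i => (Measure.tendsto_eval_ae_ae (μ := fun _ : Fin (k + 1) => μT) (i := i)).eventually ae_μT
  have h1 : ∀ᵐ ω ∂P (k + 1), ∀ i j, (ω (Fin.succAbove i j)).1 ≠ sl (ω i) * (1 - (ω (i.succAbove j)).2) :=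
    ae_all_iff.2 fun i => ae_all_iff.2 fun j => no_tie i j
  filter_upwards [h0, h1] with ω h0 h1
  have hpos : ∀ i, 0 < 1 - (ω i).2 := fun i => by
    obtain ⟨a, b, c⟩ := h0 i; linarith
  have hne : ∀ i j, i ≠ j → sl (ω i) ≠ sl (ω j) := by
    intro i j hij he
    obtain ⟨j', rfl⟩ := Fin.exists_succAbove_eq hij.symm
    apply h1 i j'
    rw [he, sl, div_mul_cancel₀ _ (hpos _).ne']
  have hD : ∀ i, ω ∈ Dset i ↔ ∀ j, j ≠ i → sl (ω i) < sl (ω j) := by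
    intro i
    constructor
    · intro h j hj
      obtain ⟨j', rfl⟩ := Fin.exists_succAbove_eq hj
      have := h j'
      rw [sl, sl, lt_div_iff₀ (hpos _)]
      exact this
    · intro h j
      have := h _ (Fin.succAbove_ne i j)
      rw [sl, sl, lt_div_iff₀ (hpos _)] at this
      exact this
  obtain ⟨i, hi⟩ := Finite.exists_min fun i => sl (ω i)
  have hiD : ω ∈ Dset i := (hD i).2 fun j hj => lt_of_le_of_ne (hi j) (hne i j hj.symm)
  rw [Finset.sum_eq_single i, indicator_of_mem hiD]
  · intro j _ hj
    apply indicator_of_notMem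
    intro hjD
    exact absurd ((hD j).1 hjD i hj.symm) (not_lt.2 (hi j))
  · simp

theorem recursion (k : ℕ) (F : ENNReal → ENNReal) (hF : Measurable F) :
    ∫⁻ ω, F (volume (Tchain (k + 1) ω)) ∂P (k + 1) =
    ((k : ENNReal) + 1) * (2 * ∫⁻ r in Ioo (0:ℝ) 1, ENNReal.ofReal r * ∫⁻ p in Ioo (0:ℝ) 1,
    ∑ m ∈ Finset.range (k + 1), (k.choose m : ENNReal) * ENNReal.ofReal (r * (1 - p)) ^ (k - m) *
      (ENNReal.ofReal ((1 - r) * (1 - p)) ^ m *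
        ∫⁻ ω, F (ENNReal.ofReal (r * (1 - p)) * (1 / 2) + ENNReal.ofReal ((1 - r) * (1 - p)) *
          volume (Tchain m ω)) ∂P m)) := by
  have hf : Measurable fun ω : Fin (k + 1) → ℝ × ℝ => F (area (range ω)) := hF.comp (meas_area _)
  rw [lintegral_congr_ae (decomp fun ω => F (volume (Tchain (k + 1) ω)))]
  have hf' : Measurable fun ω : Fin (k + 1) → ℝ × ℝ => F (volume (Tchain (k + 1) ω)) := hf
  rw [lintegral_finsetSum _ (fun i _ => hf'.indicator (measurableSet_Dset i))]
  have hi : ∀ i : Fin (k + 1), ∫⁻ ω, (Dset i).indicator (fun ω => F (volume (Tchain (k + 1) ω))) ω ∂P (k + 1) =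
      2 * ∫⁻ r in Ioo (0:ℝ) 1, ENNReal.ofReal r * ∫⁻ p in Ioo (0:ℝ) 1,
    ∑ m ∈ Finset.range (k + 1), (k.choose m : ENNReal) * ENNReal.ofReal (r * (1 - p)) ^ (k - m) *
      (ENNReal.ofReal ((1 - r) * (1 - p)) ^ m *
        ∫⁻ ω, F (ENNReal.ofReal (r * (1 - p)) * (1 / 2) + ENNReal.ofReal ((1 - r) * (1 - p)) *
          volume (Tchain m ω)) ∂P m) := by
    intro i
    have hmi := hf.indicator (measurableSet_Dset i)
    unfold P
    refine (lint_pi_succ _ i _ hmi).trans ?_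
    have hJ : Measurable fun z : ℝ × ℝ => ∫⁻ ω, (Dset i).indicator (fun ω => F (area (range ω)))
      (i.insertNth z ω) ∂(Measure.pi fun _ : Fin k => μT) :=
      (hmi.comp (measurable_insertNth i)).lintegral_prod_right'
    conv_lhs => rw [μT_eq]
    rw [lintegral_smul_measure, ← μT_eq, smul_eq_mul, lint_T0 _ hJ]
    congr 1
    apply setLIntegral_congr_fun measurableSet_Ioo
    intro r hr
    simp only
    congr 1
    apply setLIntegral_congr_fun measurableSet_Ioo
    intro p hp
    simp only
    refine Eq.trans ?_ (inner_eq hp hr k F hF)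
    apply lintegral_congr
    intro ω
    have hsl : sl (r * p, 1 - r) = p := by
      simp [sl, hr.1.ne']
    by_cases h : ω ∈ univ.pi fun _ : Fin k => half p
    · rw [indicator_of_mem h, indicator_of_mem, range_insertNth]
      intro j
      rw [Fin.insertNth_apply_succAbove, Fin.insertNth_apply_same, hsl]
      exact h j (mem_univ j)
    · rw [indicator_of_notMem h, indicator_of_notMem]
      intro h'
      apply h
      intro j _
      have := h' j
      rwa [Fin.insertNth_apply_succAbove, Fin.insertNth_apply_same, hsl] at this
  rw [Finset.sum_congr rfl (fun i _ => hi i)]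
  simp

end RC
end A5

section A7
open Set
namespace RC

def es (n : ℕ) : ℝ := 1 / 2 - (2 * H (n + 1) + 1) / (6 * ((n : ℝ) + 1))

def vs (n : ℕ) : ℝ := (7 * (n : ℝ) ^ 2 + 24 * n + 14) * H (n + 1) /
            (27 * ((n : ℝ) + 1) ^ 2 * ((n : ℝ) + 2) ^ 2)
        - H (n + 1) ^ 2 / (9 * ((n : ℝ) + 1) ^ 2 * ((n : ℝ) + 2))
        + H2 (n + 1) / (9 * ((n : ℝ) + 1) * ((n : ℝ) + 2))
        - (55 * (n : ℝ) ^ 4 + 391 * (n : ℝ) ^ 3 + 962 * (n : ℝ) ^ 2 + 956 * n + 336) /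
            (108 * ((n : ℝ) + 1) ^ 2 * ((n : ℝ) + 2) ^ 3 * ((n : ℝ) + 3))

def ss (n : ℕ) : ℝ := vs n + es n ^ 2

lemma H_succ (j : ℕ) : H (j + 1) = H j + 1 / ((j : ℝ) + 1) := by
  unfold H; rw [Finset.sum_range_succ]
lemma H2_succ (j : ℕ) : H2 (j + 1) = H2 j + 1 / ((j : ℝ) + 1) ^ 2 := by
  unfold H2; rw [Finset.sum_range_succ]

lemma sum_kernel (f : ℕ → ℝ) (n : ℕ) :
    ∑ m ∈ Finset.range (n + 1), ((n : ℝ) + 1 - m) * f m =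
    ∑ m ∈ Finset.range n, ((n : ℝ) - m) * f m + ∑ m ∈ Finset.range (n + 1), f m := by
  have h : ∑ m ∈ Finset.range n, ((n : ℝ) - m) * f m = ∑ m ∈ Finset.range (n + 1), ((n : ℝ) - m) * f m := by
    rw [Finset.sum_range_succ]; simp
  rw [h, ← Finset.sum_add_distrib]
  exact Finset.sum_congr rfl fun m _ => by ring

lemma sum_kernel2 (f : ℕ → ℝ) (n : ℕ) :
    ∑ m ∈ Finset.range (n + 1), ((n : ℝ) + 2 - m) * ((n : ℝ) + 1 - m) * f m =
    ∑ m ∈ Finset.range n, ((n : ℝ) + 1 - m) * ((n : ℝ) - m) * f m +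
    2 * ∑ m ∈ Finset.range (n + 1), ((n : ℝ) + 1 - m) * f m := by
  have h : ∑ m ∈ Finset.range n, ((n : ℝ) + 1 - m) * ((n : ℝ) - m) * f m =
      ∑ m ∈ Finset.range (n + 1), ((n : ℝ) + 1 - m) * ((n : ℝ) - m) * f m := by
    rw [Finset.sum_range_succ _ n]; simp
  rw [h, Finset.mul_sum, ← Finset.sum_add_distrib]
  exact Finset.sum_congr rfl fun m _ => by ring

/-- first order kernel from second differences -/
lemma kernel_eq (f A g : ℕ → ℝ) (h0 : A 0 = 0) (h1 : A 1 = g 0 + f 0)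
    (h2 : ∀ n, A (n + 2) - 2 * A (n + 1) + A n = (g (n + 1) - g n) + f (n + 1)) (n : ℕ) :
    A n = ∑ m ∈ Finset.range n, g m + ∑ m ∈ Finset.range n, ((n : ℝ) - m) * f m ∧
    A (n + 1) - A n = g n + ∑ m ∈ Finset.range (n + 1), f m := by
  induction n with
  | zero => simp [h0, h1]
  | succ n ih =>
    obtain ⟨ih1, ih2⟩ := ih
    constructor
    · push_cast
      rw [sum_kernel, Finset.sum_range_succ g]
      linarith
    · rw [Finset.sum_range_succ f]
      linarith [h2 n]

def As (n : ℕ) : ℝ := ((n : ℝ) + 1) * (n + 2) * (((n : ℝ) + 1) * es n / 2 - n / 6)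

lemma H_one : H 1 = 1 := by simp [H]
lemma H2_one : H2 1 = 1 := by simp [H2]

lemma As_eq (n : ℕ) : As n = ∑ m ∈ Finset.range n, ((n : ℝ) - m) * (((m : ℝ) + 1) * es m) := by
  have := (kernel_eq (fun m => ((m : ℝ) + 1) * es m) As (fun _ => 0) ?_ ?_ ?_ n).1
  · simpa using this
  · simp only [As, es, zero_add, H_one]; norm_num
  · simp only [As, es, zero_add, H_one, H_succ 1]; norm_num
  · intro n
    have e1 : H (n + 2 + 1) = H (n + 1) + 1 / ((n : ℝ) + 2) + 1 / ((n : ℝ) + 3) := by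
      rw [H_succ, H_succ (n + 1)]; push_cast; ring
    have e2 : H (n + 1 + 1) = H (n + 1) + 1 / ((n : ℝ) + 2) := by
      rw [H_succ (n + 1)]; push_cast; ring
    simp only [As, es, e1, e2]
    generalize H (n + 1) = h
    push_cast
    have n1 : (n : ℝ) + 1 ≠ 0 := by positivity
    have n2 : (n : ℝ) + 2 ≠ 0 := by positivity
    have n3 : (n : ℝ) + 3 ≠ 0 := by positivity
    have n2' : (n : ℝ) + 1 + 1 ≠ 0 := by positivity
    have n3' : (n : ℝ) + 2 + 1 ≠ 0 := by positivity
    field_simp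
    ring

def Ds (n : ℕ) : ℝ := ((n : ℝ) + 2) * (n + 3) * (((n : ℝ) + 1) * (n + 2) * ss n / 2 - n * (n + 1) / 16)

lemma Ds_eq (n : ℕ) : Ds n =
    ∑ m ∈ Finset.range n, ((n : ℝ) + 1 - m) * ((n : ℝ) - m) * (((m : ℝ) + 1) * es m) +
    ∑ m ∈ Finset.range n, ((n : ℝ) - m) * (((m : ℝ) + 1) * (m + 2) * ss m) := by
  have := (kernel_eq (fun m => ((m : ℝ) + 1) * (m + 2) * ss m) Ds (fun n => 2 * As (n + 1)) ?_ ?_ ?_ n).1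
  · rw [this]
    congr 1
    clear this
    induction n with
    | zero => simp
    | succ n ih =>
      have k := sum_kernel2 (fun m => ((m : ℝ) + 1) * es m) n
      have a := As_eq (n + 1)
      push_cast at a ⊢
      rw [Finset.sum_range_succ, ih, a]
      rw [← k]
      apply Finset.sum_congr rfl; intro m _; ring
  · simp only [Ds, ss, vs, es, zero_add, H_one, H2_one]; norm_num
  · simp only [Ds, As, ss, vs, es, zero_add, H_one, H2_one, H_succ 1, H2_succ 1]; norm_num
  · intro n
    have e1 : H (n + 2 + 1) = H (n + 1) + 1 / ((n : ℝ) + 2) + 1 / ((n : ℝ) + 3) := by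
      rw [H_succ, H_succ (n + 1)]; push_cast; ring
    have e2 : H (n + 1 + 1) = H (n + 1) + 1 / ((n : ℝ) + 2) := by
      rw [H_succ (n + 1)]; push_cast; ring
    have e1' : H2 (n + 2 + 1) = H2 (n + 1) + 1 / ((n : ℝ) + 2) ^ 2 + 1 / ((n : ℝ) + 3) ^ 2 := by
      rw [H2_succ, H2_succ (n + 1)]; push_cast; ring
    have e2' : H2 (n + 1 + 1) = H2 (n + 1) + 1 / ((n : ℝ) + 2) ^ 2 := by
      rw [H2_succ (n + 1)]; push_cast; ring
    have e3 : H (n + 1 + 1 + 1) = H (n + 1) + 1 / ((n : ℝ) + 2) + 1 / ((n : ℝ) + 3) := e1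
    simp only [Ds, As, ss, vs, es, e1, e2, e1', e2']
    generalize H (n + 1) = h
    generalize H2 (n + 1) = h2
    push_cast
    obtain ⟨x, hx⟩ : ∃ x : ℝ, x = n := ⟨_, rfl⟩
    have hx0 : 0 ≤ x := by rw [hx]; positivity
    rw [← hx]
    have r1 : x + 1 + 1 = x + 2 := by ring
    have r2 : x + 1 + 2 = x + 3 := by ring
    have r3 : x + 1 + 3 = x + 4 := by ring
    have r4 : x + 2 + 1 = x + 3 := by ring
    have r5 : x + 2 + 2 = x + 4 := by ring
    have r6 : x + 2 + 3 = x + 5 := by ring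
    simp only [r1, r2, r3, r4, r5, r6]
    have n1 : x + 1 ≠ 0 := by positivity
    have n2 : x + 2 ≠ 0 := by positivity
    have n3 : x + 3 ≠ 0 := by positivity
    have n4 : x + 4 ≠ 0 := by positivity
    have n5 : x + 5 ≠ 0 := by positivity
    field_simp
    ring

theorem closed (e s : ℕ → ℝ) (he0 : e 0 = 0) (hs0 : s 0 = 0)
    (he : ∀ k : ℕ, e (k + 1) = 2 * ((k : ℝ) + 1) / (k + 2) * (1 / 6 +
      (∑ m ∈ Finset.range (k + 1), ((k : ℝ) + 1 - m) * (((m : ℝ) + 1) * e m)) /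
        (((k : ℝ) + 1) * (k + 2) * (k + 3))))
    (hs : ∀ k : ℕ, s (k + 1) = 2 * ((k : ℝ) + 1) / (k + 3) * (1 / 16 +
      (∑ m ∈ Finset.range (k + 1), ((k : ℝ) + 2 - m) * ((k : ℝ) + 1 - m) * (((m : ℝ) + 1) * e m) +
       ∑ m ∈ Finset.range (k + 1), ((k : ℝ) + 1 - m) * (((m : ℝ) + 1) * (m + 2) * s m)) /
        (((k : ℝ) + 1) * (k + 2) * (k + 3) * (k + 4)))) (n : ℕ) :
    s n - e n ^ 2 = vs n := by
  have hE : ∀ n, e n = es n := by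
    intro n
    induction n using Nat.strong_induction_on with
    | _ n ih =>
      rcases n with _ | k
      · rw [he0, es, zero_add, H_one]; norm_num
      · rw [he, Finset.sum_congr rfl (fun m hm => by rw [ih m (Finset.mem_range.1 hm)])]
        have := As_eq (k + 1)
        push_cast at this
        rw [← this, As]
        push_cast
        have n1 : (k : ℝ) + 1 ≠ 0 := by positivity
        have n2 : (k : ℝ) + 2 ≠ 0 := by positivity
        have n3 : (k : ℝ) + 3 ≠ 0 := by positivity
        field_simp
        ring
  have hS : ∀ n, s n = ss n := by
    intro n
    induction n using Nat.strong_induction_on with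
    | _ n ih =>
      rcases n with _ | k
      · rw [hs0, ss, vs, es, zero_add, H_one, H2_one]; norm_num
      · have q1 : ∑ m ∈ Finset.range (k + 1), ((k : ℝ) + 2 - m) * ((k : ℝ) + 1 - m) *
            (((m : ℝ) + 1) * e m) = ∑ m ∈ Finset.range (k + 1), ((k : ℝ) + 2 - m) *
            ((k : ℝ) + 1 - m) * (((m : ℝ) + 1) * es m) :=
          Finset.sum_congr rfl fun m _ => by rw [hE m]
        have q2 : ∑ m ∈ Finset.range (k + 1), ((k : ℝ) + 1 - m) * (((m : ℝ) + 1) * (m + 2) * s m) =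
            ∑ m ∈ Finset.range (k + 1), ((k : ℝ) + 1 - m) * (((m : ℝ) + 1) * (m + 2) * ss m) :=
          Finset.sum_congr rfl fun m hm => by rw [ih m (Finset.mem_range.1 hm)]
        rw [hs, q1, q2]
        have := Ds_eq (k + 1)
        push_cast at this
        rw [show (k : ℝ) + 1 + 1 = k + 2 by ring] at this
        rw [← this, Ds]
        push_cast
        have n1 : (k : ℝ) + 1 ≠ 0 := by positivity
        have n2 : (k : ℝ) + 2 ≠ 0 := by positivity
        have n3 : (k : ℝ) + 3 ≠ 0 := by positivity
        have n4 : (k : ℝ) + 4 ≠ 0 := by positivity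
        field_simp
        ring
  rw [hE, hS, ss]; ring

end RC
end A7

section A6
open Set
namespace RC

def em (m : ℕ) : ℝ := ∫ ω, (volume (Tchain m ω)).toReal ∂P m
def sm (m : ℕ) : ℝ := ∫ ω, (volume (Tchain m ω)).toReal ^ 2 ∂P m

theorem T0_sub_T : T0 ⊆ T := by
  rw [T_eq]; rintro z ⟨h1, h2, h3⟩; exact ⟨h1.le, h2.le, h3.le⟩

theorem ae_le (m : ℕ) : ∀ᵐ ω ∂P m, volume (Tchain m ω) ≤ 1 / 2 := by
  have h : ∀ᵐ ω ∂P m, ∀ i, ω i ∈ T0 := ae_all_iff.2 fun i =>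
    (Measure.tendsto_eval_ae_ae (μ := fun _ : Fin m => μT) (i := i)).eventually ae_μT
  filter_upwards [h] with ω hω
  rw [← vol_T]
  apply measure_mono
  apply convexHull_min _ (convex_convexHull ℝ _)
  rintro z (⟨i, rfl⟩ | hz)
  · exact T0_sub_T (hω i)
  · apply subset_convexHull
    rcases hz with rfl | rfl <;> simp

theorem meas_real (m : ℕ) : Measurable fun ω => (volume (Tchain m ω)).toReal :=
  (meas_vol m).ennreal_toReal

theorem ae_le_real (m : ℕ) : ∀ᵐ ω ∂P m, (volume (Tchain m ω)).toReal ≤ 1 / 2 := by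
  filter_upwards [ae_le m] with ω hω
  have := ENNReal.toReal_mono (by simp) hω
  simpa using this

theorem int1 (m : ℕ) : Integrable (fun ω => (volume (Tchain m ω)).toReal) (P m) := by
  refine Integrable.of_bound (meas_real m).aestronglyMeasurable (1 / 2) ?_
  filter_upwards [ae_le_real m] with ω hω
  rwa [Real.norm_of_nonneg ENNReal.toReal_nonneg]

theorem int2 (m : ℕ) : Integrable (fun ω => (volume (Tchain m ω)).toReal ^ 2) (P m) := by
  refine Integrable.of_bound ((meas_real m).pow_const 2).aestronglyMeasurable 1 ?_
  filter_upwards [ae_le_real m] with ω hω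
  rw [Real.norm_of_nonneg (by positivity)]
  have : 0 ≤ (volume (Tchain m ω)).toReal := ENNReal.toReal_nonneg
  nlinarith

theorem em_nonneg (m : ℕ) : 0 ≤ em m := integral_nonneg fun _ => ENNReal.toReal_nonneg
theorem sm_nonneg (m : ℕ) : 0 ≤ sm m := integral_nonneg fun _ => by positivity

theorem vol_zero (ω : Fin 0 → ℝ × ℝ) : volume (Tchain 0 ω) = 0 := by
  have h : Tchain 0 ω ⊆ {z : ℝ × ℝ | z.1 = 1 - z.2} := by
    apply convexHull_min
    · rintro z (⟨i, rfl⟩ | hz)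
      · exact i.elim0
      · rcases hz with rfl | rfl <;> simp
    · rintro ⟨a, b⟩ hx ⟨a', b'⟩ hy s t hs ht hst
      simp only [mem_ofPred_eq, Prod.smul_mk, Prod.mk_add_mk, smul_eq_mul] at *
      subst hx hy
      linear_combination hst
  exact measure_mono_null h (line_null1 (f := fun y => 1 - y) (by fun_prop))

theorem em_zero : em 0 = 0 := by simp [em, vol_zero]
theorem sm_zero : sm 0 = 0 := by simp [sm, vol_zero]

theorem lin_lint (m : ℕ) (a b : ℝ) (ha : 0 ≤ a) (hb : 0 ≤ b) :
    ∫⁻ ω, (ENNReal.ofReal b * (1 / 2) + ENNReal.ofReal a * volume (Tchain m ω)) ∂P m =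
    ENNReal.ofReal (b / 2 + a * em m) := by
  have h : ∀ᵐ ω ∂P m, ENNReal.ofReal b * (1 / 2) + ENNReal.ofReal a * volume (Tchain m ω) =
      ENNReal.ofReal (b / 2 + a * (volume (Tchain m ω)).toReal) := by
    filter_upwards [ae_le m] with ω hω
    have hf : volume (Tchain m ω) ≠ ⊤ := (hω.trans_lt (by simp)).ne
    rw [ENNReal.ofReal_add (by positivity) (by positivity), ENNReal.ofReal_mul ha,
      ENNReal.ofReal_toReal hf, div_eq_mul_inv b, ENNReal.ofReal_mul hb]
    congr 2
    rw [ENNReal.ofReal_inv_of_pos (by norm_num)]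
    simp
  rw [lintegral_congr_ae h, ← ofReal_integral_eq_lintegral_ofReal]
  · rw [integral_add (integrable_const _) ((int1 m).const_mul a), integral_const_mul]
    simp [em]
  · exact (integrable_const _).add ((int1 m).const_mul a)
  · exact Filter.Eventually.of_forall fun _ => by positivity

theorem sq_lint (m : ℕ) (a b : ℝ) (ha : 0 ≤ a) (hb : 0 ≤ b) :
    ∫⁻ ω, (ENNReal.ofReal b * (1 / 2) + ENNReal.ofReal a * volume (Tchain m ω)) ^ 2 ∂P m =
    ENNReal.ofReal (b ^ 2 / 4 + a * b * em m + a ^ 2 * sm m) := by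
  have h : ∀ᵐ ω ∂P m, (ENNReal.ofReal b * (1 / 2) + ENNReal.ofReal a * volume (Tchain m ω)) ^ 2 =
      ENNReal.ofReal (b ^ 2 / 4 + a * b * (volume (Tchain m ω)).toReal +
        a ^ 2 * (volume (Tchain m ω)).toReal ^ 2) := by
    filter_upwards [ae_le m] with ω hω
    have hf : volume (Tchain m ω) ≠ ⊤ := (hω.trans_lt (by simp)).ne
    have : ENNReal.ofReal b * (1 / 2) + ENNReal.ofReal a * volume (Tchain m ω) =
        ENNReal.ofReal (b / 2 + a * (volume (Tchain m ω)).toReal) := by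
      rw [ENNReal.ofReal_add (by positivity) (by positivity), ENNReal.ofReal_mul ha,
        ENNReal.ofReal_toReal hf, div_eq_mul_inv b, ENNReal.ofReal_mul hb]
      congr 2
      rw [ENNReal.ofReal_inv_of_pos (by norm_num)]
      simp
    rw [this, ← ENNReal.ofReal_pow (by positivity)]
    congr 1; ring
  have i1 : Integrable (fun ω => b ^ 2 / 4 + a * b * (volume (Tchain m ω)).toReal) (P m) :=
    (integrable_const _).add ((int1 m).const_mul (a * b))
  rw [lintegral_congr_ae h, ← ofReal_integral_eq_lintegral_ofReal]
  · rw [integral_add i1 ((int2 m).const_mul (a ^ 2)),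
      integral_add (integrable_const _) ((int1 m).const_mul (a * b)), integral_const_mul,
      integral_const_mul]
    simp [em, sm]
  · exact i1.add ((int2 m).const_mul (a ^ 2))
  · exact Filter.Eventually.of_forall fun _ => by positivity

/-- generic polar integral -/
theorem polar (d : ℕ) (Q : ℝ → ℝ) (hQ : Continuous Q) (h0 : ∀ r ∈ Ioo (0:ℝ) 1, 0 ≤ Q r) :
    ∫⁻ r in Ioo (0:ℝ) 1, ENNReal.ofReal r * ∫⁻ p in Ioo (0:ℝ) 1,
      ENNReal.ofReal ((1 - p) ^ d * Q r) =
    ENNReal.ofReal (1 / ((d : ℝ) + 1) * ∫ r in (0:ℝ)..1, r * Q r) := by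
  have hp : ∀ r ∈ Ioo (0:ℝ) 1, ∫⁻ p in Ioo (0:ℝ) 1, ENNReal.ofReal ((1 - p) ^ d * Q r) =
      ENNReal.ofReal (1 / ((d : ℝ) + 1) * Q r) := by
    intro r hr
    have hc : Continuous fun p : ℝ => (1 - p) ^ d * Q r := by fun_prop
    rw [← ofReal_integral_eq_lintegral_ofReal
      ((hc.integrableOn_Icc (a := 0) (b := 1)).mono_set Ioo_subset_Icc_self)]
    · rw [← integral_Ioc_eq_integral_Ioo, ← intervalIntegral.integral_of_le zero_le_one,
        intervalIntegral.integral_mul_const,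
        intervalIntegral.integral_comp_sub_left (fun x => x ^ d) (1:ℝ)]
      simp
    · filter_upwards [ae_restrict_mem measurableSet_Ioo] with p hp
      have := h0 r hr
      have : 0 ≤ 1 - p := by linarith [hp.2]
      positivity
  have e1 : ∫⁻ r in Ioo (0:ℝ) 1, ENNReal.ofReal r * ∫⁻ p in Ioo (0:ℝ) 1,
      ENNReal.ofReal ((1 - p) ^ d * Q r) =
      ∫⁻ r in Ioo (0:ℝ) 1, ENNReal.ofReal (1 / ((d : ℝ) + 1) * (r * Q r)) := by
    apply setLIntegral_congr_fun measurableSet_Ioo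
    intro r hr
    simp only
    rw [hp r hr, ← ENNReal.ofReal_mul hr.1.le]
    congr 1; ring
  have hc : Continuous fun r : ℝ => 1 / ((d : ℝ) + 1) * (r * Q r) := by fun_prop
  rw [e1, ← ofReal_integral_eq_lintegral_ofReal
      ((hc.integrableOn_Icc (a := 0) (b := 1)).mono_set Ioo_subset_Icc_self)]
  · rw [← integral_Ioc_eq_integral_Ioo, ← intervalIntegral.integral_of_le zero_le_one,
        intervalIntegral.integral_const_mul]
  · filter_upwards [ae_restrict_mem measurableSet_Ioo] with r hr
    have := h0 r hr
    have := hr.1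
    positivity

/-- beta integral -/
theorem beta (b : ℕ) : ∀ a : ℕ, ∫ r in (0:ℝ)..1, r ^ a * (1 - r) ^ b =
    (a.factorial : ℝ) * b.factorial / (a + b + 1).factorial := by
  induction b with
  | zero =>
    intro a
    have : (a.factorial : ℝ) ≠ 0 := by positivity
    simp [Nat.factorial_succ]
    field_simp
  | succ b ih =>
    intro a
    have hp := intervalIntegral.integral_mul_deriv_eq_deriv_mul (a := 0) (b := 1)
      (u := fun r : ℝ => (1 - r) ^ (b + 1)) (v := fun r => r ^ (a + 1) / ((a : ℝ) + 1))
      (u' := fun r => -((b : ℝ) + 1) * (1 - r) ^ b) (v' := fun r => r ^ a)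
      (fun x _ => by
        have := ((hasDerivAt_id x).const_sub 1).pow (b + 1)
        convert this using 1
        · rfl
        · simp only [id, Nat.add_sub_cancel]
          push_cast
          ring) (fun x _ => by
        have := (hasDerivAt_pow (a + 1) x).div_const ((a : ℝ) + 1)
        convert this using 1
        push_cast
        have : (a : ℝ) + 1 ≠ 0 := by positivity
        field_simp)
      ((by fun_prop : Continuous fun r : ℝ => -((b : ℝ) + 1) * (1 - r) ^ b).intervalIntegrable _ _)
      ((by fun_prop : Continuous fun r : ℝ => r ^ a).intervalIntegrable _ _)
    have e1 : ∀ r : ℝ, r ^ a * (1 - r) ^ (b + 1) = (1 - r) ^ (b + 1) * r ^ a := fun r => mul_comm _ _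
    have e2 : ∀ r : ℝ, -((b : ℝ) + 1) * (1 - r) ^ b * (r ^ (a + 1) / ((a : ℝ) + 1)) =
      (-((b : ℝ) + 1) / ((a : ℝ) + 1)) * (r ^ (a + 1) * (1 - r) ^ b) := fun r => by ring
    simp_rw [e2] at hp
    simp_rw [e1]
    rw [hp, intervalIntegral.integral_const_mul, ih, show a + 1 + b + 1 = a + (b + 1) + 1 by ring]
    simp only [Nat.factorial_succ]
    have : (a : ℝ) + 1 ≠ 0 := by positivity
    push_cast
    simp
    field_simp
    ring

theorem binom_one (k : ℕ) (r : ℝ) :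
    ∑ m ∈ Finset.range (k + 1), (k.choose m : ℝ) * r ^ (k - m) * (1 - r) ^ m = 1 := by
  have := add_pow (1 - r) r k
  rw [show 1 - r + r = 1 by ring, one_pow] at this
  refine Eq.trans (Finset.sum_congr rfl fun m _ => ?_) this.symm
  ring

theorem choose_id (k m : ℕ) (h : m ≤ k) :
    (k.choose m : ℝ) * ((k - m).factorial * m.factorial) = k.factorial := by
  have := Nat.choose_mul_factorial_mul_factorial h
  rw [← this]; push_cast; ring

theorem term_eq (k m d : ℕ) (h : m ≤ k) (r p x y : ℝ) (hr : r ∈ Ioo (0:ℝ) 1) (hp : p ∈ Ioo (0:ℝ) 1)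
    (hy : y = (1 - p) ^ d * x) :
    (k.choose m : ENNReal) * ENNReal.ofReal (r * (1 - p)) ^ (k - m) *
      (ENNReal.ofReal ((1 - r) * (1 - p)) ^ m * ENNReal.ofReal y) =
    ENNReal.ofReal ((1 - p) ^ (k + d) * ((k.choose m : ℝ) * r ^ (k - m) * (1 - r) ^ m * x)) := by
  have h1 : 0 < 1 - r := by linarith [hr.2]
  have h2 : 0 < 1 - p := by linarith [hp.2]
  have h3 := hr.1
  rw [← ENNReal.ofReal_natCast, ← ENNReal.ofReal_pow (by positivity),
    ← ENNReal.ofReal_pow (by positivity), ← ENNReal.ofReal_mul (by positivity),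
    ← ENNReal.ofReal_mul (by positivity), ← ENNReal.ofReal_mul (by positivity), hy]
  congr 1
  obtain ⟨j, rfl⟩ := Nat.exists_eq_add_of_le h
  rw [Nat.add_sub_cancel_left, mul_pow, mul_pow]
  ring

theorem main_rec (k d : ℕ) (F : ENNReal → ENNReal) (hF : Measurable F) (x : ℕ → ℝ → ℝ)
    (hx : ∀ m, Continuous (x m)) (hx0 : ∀ m, ∀ r ∈ Ioo (0:ℝ) 1, 0 ≤ x m r)
    (hFx : ∀ m, ∀ r ∈ Ioo (0:ℝ) 1, ∀ p ∈ Ioo (0:ℝ) 1,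
      ∫⁻ ω, F (ENNReal.ofReal (r * (1 - p)) * (1 / 2) + ENNReal.ofReal ((1 - r) * (1 - p)) *
          volume (Tchain m ω)) ∂P m = ENNReal.ofReal ((1 - p) ^ d * x m r)) :
    ∫⁻ ω, F (volume (Tchain (k + 1) ω)) ∂P (k + 1) = ENNReal.ofReal
      (2 * ((k : ℝ) + 1) / ((k : ℝ) + d + 1) * ∑ m ∈ Finset.range (k + 1),
        ∫ r in (0:ℝ)..1, (k.choose m : ℝ) * r ^ (k - m + 1) * (1 - r) ^ m * x m r) := by
  set Q : ℝ → ℝ := fun r => ∑ m ∈ Finset.range (k + 1),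
    (k.choose m : ℝ) * r ^ (k - m) * (1 - r) ^ m * x m r with hQ
  have hQt : ∀ r ∈ Ioo (0:ℝ) 1, ∀ m, 0 ≤ (k.choose m : ℝ) * r ^ (k - m) * (1 - r) ^ m * x m r := by
    intro r hr m
    have h1 : 0 < 1 - r := by linarith [hr.2]
    have h3 := hr.1
    have := hx0 m r hr
    positivity
  have hQ0 : ∀ r ∈ Ioo (0:ℝ) 1, 0 ≤ Q r := fun r hr => Finset.sum_nonneg fun m _ => hQt r hr m
  have hQc : Continuous Q := by
    apply continuous_finsetSum
    intro m _
    have := hx m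
    fun_prop
  have key : ∫⁻ r in Ioo (0:ℝ) 1, ENNReal.ofReal r * ∫⁻ p in Ioo (0:ℝ) 1,
    ∑ m ∈ Finset.range (k + 1), (k.choose m : ENNReal) * ENNReal.ofReal (r * (1 - p)) ^ (k - m) *
      (ENNReal.ofReal ((1 - r) * (1 - p)) ^ m *
        ∫⁻ ω, F (ENNReal.ofReal (r * (1 - p)) * (1 / 2) + ENNReal.ofReal ((1 - r) * (1 - p)) *
          volume (Tchain m ω)) ∂P m) =
      ∫⁻ r in Ioo (0:ℝ) 1, ENNReal.ofReal r * ∫⁻ p in Ioo (0:ℝ) 1,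
        ENNReal.ofReal ((1 - p) ^ (k + d) * Q r) := by
    apply setLIntegral_congr_fun measurableSet_Ioo
    intro r hr
    simp only
    congr 1
    apply setLIntegral_congr_fun measurableSet_Ioo
    intro p hp
    simp only
    have h2 : 0 < 1 - p := by linarith [hp.2]
    rw [hQ, Finset.mul_sum, ENNReal.ofReal_sum_of_nonneg]
    · apply Finset.sum_congr rfl
      intro m hm
      rw [hFx m r hr p hp]
      exact term_eq k m d (Nat.lt_succ_iff.1 (Finset.mem_range.1 hm)) r p _ _ hr hp rfl
    · intro m _
      have := hQt r hr m
      positivity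
  rw [recursion k F hF, key, polar (k + d) Q hQc hQ0]
  have e1 : ∫ r in (0:ℝ)..1, r * Q r = ∑ m ∈ Finset.range (k + 1),
        ∫ r in (0:ℝ)..1, (k.choose m : ℝ) * r ^ (k - m + 1) * (1 - r) ^ m * x m r := by
    rw [← intervalIntegral.integral_finsetSum]
    · congr 1
      ext r
      rw [hQ, Finset.mul_sum]
      exact Finset.sum_congr rfl fun m _ => by ring
    · intro m _
      have := hx m
      exact Continuous.intervalIntegrable (by fun_prop) _ _
  rw [e1, show ((k : ENNReal) + 1) = ENNReal.ofReal ((k : ℝ) + 1) by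
      rw [ENNReal.ofReal_add (by positivity) zero_le_one]; simp,
    show (2 : ENNReal) = ENNReal.ofReal 2 by simp, ← ENNReal.ofReal_mul (by norm_num),
    ← ENNReal.ofReal_mul (by positivity)]
  congr 1
  push_cast
  ring

theorem sum_const (k j : ℕ) (cst : ℝ) : ∑ m ∈ Finset.range (k + 1),
    ∫ r in (0:ℝ)..1, (k.choose m : ℝ) * r ^ (k - m + 1) * (1 - r) ^ m * (r ^ j * cst) =
      cst / ((j : ℝ) + 2) := by
  rw [← intervalIntegral.integral_finsetSum]
  · have : ∀ r : ℝ, ∑ m ∈ Finset.range (k + 1),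
        (k.choose m : ℝ) * r ^ (k - m + 1) * (1 - r) ^ m * (r ^ j * cst) = r ^ (j + 1) * cst := by
      intro r
      have hb := congrArg (fun t => t * (r ^ (j + 1) * cst)) (binom_one k r)
      simp only [one_mul, Finset.sum_mul] at hb
      rw [← hb]
      exact Finset.sum_congr rfl fun m _ => by ring
    simp_rw [this]
    rw [intervalIntegral.integral_mul_const, integral_pow]
    push_cast
    simp
    ring
  · intro m _
    exact Continuous.intervalIntegrable (by fun_prop) _ _

theorem bint (k m i j : ℕ) (x : ℝ) :
    ∫ r in (0:ℝ)..1, (k.choose m : ℝ) * r ^ (k - m + 1) * (1 - r) ^ m * (r ^ i * (1 - r) ^ j * x) =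
    (k.choose m : ℝ) * ((k - m + 1 + i).factorial * (m + j).factorial) /
      (k - m + 1 + i + (m + j) + 1).factorial * x := by
  have : ∀ r : ℝ, (k.choose m : ℝ) * r ^ (k - m + 1) * (1 - r) ^ m * (r ^ i * (1 - r) ^ j * x) =
      ((k.choose m : ℝ) * x) * (r ^ (k - m + 1 + i) * (1 - r) ^ (m + j)) := fun r => by ring
  simp_rw [this]
  rw [intervalIntegral.integral_const_mul, beta]
  ring

theorem em_lint (m : ℕ) : ∫⁻ ω, volume (Tchain m ω) ∂P m = ENNReal.ofReal (em m) := by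
  have := lin_lint m 1 0 zero_le_one le_rfl
  simpa using this

theorem sm_lint (m : ℕ) : ∫⁻ ω, volume (Tchain m ω) ^ 2 ∂P m = ENNReal.ofReal (sm m) := by
  have := sq_lint m 1 0 zero_le_one le_rfl
  simpa using this

theorem em_rec (k : ℕ) : em (k + 1) = 2 * ((k : ℝ) + 1) / (k + 2) * (1 / 6 +
      (∑ m ∈ Finset.range (k + 1), ((k : ℝ) + 1 - m) * (((m : ℝ) + 1) * em m)) /
        (((k : ℝ) + 1) * (k + 2) * (k + 3))) := by
  have h := main_rec k 1 (fun x => x) measurable_id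
    (fun m r => r ^ 1 * (1 / 2) + r ^ 0 * (1 - r) ^ 1 * em m) (fun m => by fun_prop)
    (fun m r hr => by
      have := em_nonneg m
      have h1 : 0 < 1 - r := by linarith [hr.2]
      have h3 := hr.1
      positivity)
    (fun m r hr p hp => by
      have h1 : 0 < 1 - r := by linarith [hr.2]
      have h2 : 0 < 1 - p := by linarith [hp.2]
      have h3 := hr.1
      rw [lin_lint m _ _ (by positivity) (by positivity)]
      congr 1; ring)
  have e1 : ∀ m, ∫ r in (0:ℝ)..1, (k.choose m : ℝ) * r ^ (k - m + 1) * (1 - r) ^ m *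
      (r ^ 1 * (1 / 2) + r ^ 0 * (1 - r) ^ 1 * em m) =
      (∫ r in (0:ℝ)..1, (k.choose m : ℝ) * r ^ (k - m + 1) * (1 - r) ^ m * (r ^ 1 * (1 / 2))) +
      ∫ r in (0:ℝ)..1, (k.choose m : ℝ) * r ^ (k - m + 1) * (1 - r) ^ m *
        (r ^ 0 * (1 - r) ^ 1 * em m) := by
    intro m
    rw [← intervalIntegral.integral_add]
    · congr 1; ext r; ring
    · exact Continuous.intervalIntegrable (by fun_prop) _ _
    · exact Continuous.intervalIntegrable (by fun_prop) _ _
  have e2 : ∑ m ∈ Finset.range (k + 1), ∫ r in (0:ℝ)..1, (k.choose m : ℝ) * r ^ (k - m + 1) *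
        (1 - r) ^ m * (r ^ 1 * (1 / 2) + r ^ 0 * (1 - r) ^ 1 * em m) = 1 / 6 +
      (∑ m ∈ Finset.range (k + 1), ((k : ℝ) + 1 - m) * (((m : ℝ) + 1) * em m)) /
        (((k : ℝ) + 1) * (k + 2) * (k + 3)) := by
    simp_rw [e1]
    rw [Finset.sum_add_distrib, sum_const, Finset.sum_div]
    congr 1
    · norm_num
    · apply Finset.sum_congr rfl
      intro m hm
      rw [bint]
      have hm := Nat.lt_succ_iff.1 (Finset.mem_range.1 hm)
      have hc := choose_id k m hm
      obtain ⟨j, rfl⟩ := Nat.exists_eq_add_of_le hm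
      rw [Nat.add_sub_cancel_left] at *
      rw [show j + 1 + 0 + (m + 1) + 1 = m + j + 3 by ring]
      simp only [Nat.factorial_succ, add_zero]
      push_cast
      rw [← hc]
      have : ((m + j).choose m : ℝ) ≠ 0 := by
        exact_mod_cast (Nat.choose_pos hm).ne'
      field_simp
      ring
  simp only [e2] at h
  rw [em_lint, ENNReal.ofReal_eq_ofReal_iff (em_nonneg _)] at h
  · rw [h]; push_cast; ring
  · have : 0 ≤ ∑ m ∈ Finset.range (k + 1), ((k : ℝ) + 1 - m) * (((m : ℝ) + 1) * em m) := by
      apply Finset.sum_nonneg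
      intro m hm
      have hm : (m : ℝ) ≤ k := by exact_mod_cast Nat.lt_succ_iff.1 (Finset.mem_range.1 hm)
      have := em_nonneg m
      have : 0 ≤ (k : ℝ) + 1 - m := by linarith
      positivity
    positivity

theorem sm_rec (k : ℕ) : sm (k + 1) = 2 * ((k : ℝ) + 1) / (k + 3) * (1 / 16 +
      (∑ m ∈ Finset.range (k + 1), ((k : ℝ) + 2 - m) * ((k : ℝ) + 1 - m) * (((m : ℝ) + 1) * em m) +
       ∑ m ∈ Finset.range (k + 1), ((k : ℝ) + 1 - m) * (((m : ℝ) + 1) * (m + 2) * sm m)) /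
        (((k : ℝ) + 1) * (k + 2) * (k + 3) * (k + 4))) := by
  have h := main_rec k 2 (fun x => x ^ 2) (by fun_prop)
    (fun m r => r ^ 2 * (1 / 4) + r ^ 1 * (1 - r) ^ 1 * em m + r ^ 0 * (1 - r) ^ 2 * sm m)
    (fun m => by fun_prop)
    (fun m r hr => by
      have := em_nonneg m
      have := sm_nonneg m
      have h1 : 0 < 1 - r := by linarith [hr.2]
      have h3 := hr.1
      positivity)
    (fun m r hr p hp => by
      have h1 : 0 < 1 - r := by linarith [hr.2]
      have h2 : 0 < 1 - p := by linarith [hp.2]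
      have h3 := hr.1
      rw [sq_lint m _ _ (by positivity) (by positivity)]
      congr 1; ring)
  have e1 : ∀ m, ∫ r in (0:ℝ)..1, (k.choose m : ℝ) * r ^ (k - m + 1) * (1 - r) ^ m *
      (r ^ 2 * (1 / 4) + r ^ 1 * (1 - r) ^ 1 * em m + r ^ 0 * (1 - r) ^ 2 * sm m) =
      (∫ r in (0:ℝ)..1, (k.choose m : ℝ) * r ^ (k - m + 1) * (1 - r) ^ m * (r ^ 2 * (1 / 4))) +
      ((∫ r in (0:ℝ)..1, (k.choose m : ℝ) * r ^ (k - m + 1) * (1 - r) ^ m *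
        (r ^ 1 * (1 - r) ^ 1 * em m)) +
      ∫ r in (0:ℝ)..1, (k.choose m : ℝ) * r ^ (k - m + 1) * (1 - r) ^ m *
        (r ^ 0 * (1 - r) ^ 2 * sm m)) := by
    intro m
    rw [← intervalIntegral.integral_add, ← intervalIntegral.integral_add]
    · congr 1; ext r; ring
    all_goals exact Continuous.intervalIntegrable (by fun_prop) _ _
  have e2 : ∑ m ∈ Finset.range (k + 1), ∫ r in (0:ℝ)..1, (k.choose m : ℝ) * r ^ (k - m + 1) *
        (1 - r) ^ m * (r ^ 2 * (1 / 4) + r ^ 1 * (1 - r) ^ 1 * em m + r ^ 0 * (1 - r) ^ 2 * sm m) =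
      1 / 16 +
      (∑ m ∈ Finset.range (k + 1), ((k : ℝ) + 2 - m) * ((k : ℝ) + 1 - m) * (((m : ℝ) + 1) * em m) +
       ∑ m ∈ Finset.range (k + 1), ((k : ℝ) + 1 - m) * (((m : ℝ) + 1) * (m + 2) * sm m)) /
        (((k : ℝ) + 1) * (k + 2) * (k + 3) * (k + 4)) := by
    simp_rw [e1]
    rw [Finset.sum_add_distrib, sum_const, ← Finset.sum_add_distrib, Finset.sum_div]
    congr 1
    · norm_num
    · apply Finset.sum_congr rfl
      intro m hm
      rw [bint, bint]
      have hm := Nat.lt_succ_iff.1 (Finset.mem_range.1 hm)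
      have hc := choose_id k m hm
      obtain ⟨j, rfl⟩ := Nat.exists_eq_add_of_le hm
      rw [Nat.add_sub_cancel_left] at *
      rw [show j + 1 + 1 + (m + 1) + 1 = m + j + 4 by ring,
        show j + 1 + 0 + (m + 2) + 1 = m + j + 4 by ring]
      simp only [Nat.factorial_succ, add_zero]
      push_cast
      rw [← hc]
      have : ((m + j).choose m : ℝ) ≠ 0 := by
        exact_mod_cast (Nat.choose_pos hm).ne'
      field_simp
      ring
  simp only [e2] at h
  rw [sm_lint, ENNReal.ofReal_eq_ofReal_iff (sm_nonneg _)] at h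
  · rw [h]; push_cast; ring
  · have h1 : 0 ≤ ∑ m ∈ Finset.range (k + 1),
        ((k : ℝ) + 2 - m) * ((k : ℝ) + 1 - m) * (((m : ℝ) + 1) * em m) := by
      apply Finset.sum_nonneg
      intro m hm
      have hm : (m : ℝ) ≤ k := by exact_mod_cast Nat.lt_succ_iff.1 (Finset.mem_range.1 hm)
      have := em_nonneg m
      have : 0 ≤ (k : ℝ) + 1 - m := by linarith
      have : 0 ≤ (k : ℝ) + 2 - m := by linarith
      positivity
    have h2 : 0 ≤ ∑ m ∈ Finset.range (k + 1),
        ((k : ℝ) + 1 - m) * (((m : ℝ) + 1) * (m + 2) * sm m) := by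
      apply Finset.sum_nonneg
      intro m hm
      have hm : (m : ℝ) ≤ k := by exact_mod_cast Nat.lt_succ_iff.1 (Finset.mem_range.1 hm)
      have := sm_nonneg m
      have : 0 ≤ (k : ℝ) + 1 - m := by linarith
      positivity
    positivity

theorem final (n : ℕ) : sm n - em n ^ 2 = vs n :=
  closed em sm em_zero sm_zero em_rec sm_rec n

end RC
end A6

/-- exact formula for the variance of the area of the random convex chain. -/
theorem stmt15 (n : ℕ) :
    (∫ ω, (volume (Tchain n ω)).toReal ^ 2 ∂ P n)
        - (∫ ω, (volume (Tchain n ω)).toReal ∂ P n) ^ 2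
      = (7 * (n : ℝ) ^ 2 + 24 * n + 14) * H (n + 1) /
            (27 * ((n : ℝ) + 1) ^ 2 * ((n : ℝ) + 2) ^ 2)
        - H (n + 1) ^ 2 / (9 * ((n : ℝ) + 1) ^ 2 * ((n : ℝ) + 2))
        + H2 (n + 1) / (9 * ((n : ℝ) + 1) * ((n : ℝ) + 2))
        - (55 * (n : ℝ) ^ 4 + 391 * (n : ℝ) ^ 3 + 962 * (n : ℝ) ^ 2 + 956 * n + 336) /
            (108 * ((n : ℝ) + 1) ^ 2 * ((n : ℝ) + 2) ^ 3 * ((n : ℝ) + 3)) := by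
  exact RC.final n

end
end
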